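/- arXiv:1712.08696 — 3 statements merged into one kernel-verified Lean document; each statement's English description precedes it below -/
import Mathlib

section
/- Let Ω be a bounded open subset of ℝ² with C² boundary and δ > 0. Let f₀, f₁ be smooth real-valued functions with compact supports contained in Ω such that |x − y| > δ for every x ∈ ∂Ω and every y in the support of f₀ or f₁. Then there exists a constant C depending only on Ω and δ such that for every k with δk ≥ 1, ∫_{|ω|>k} ω² ‖u(·,ω)‖²_{L²(∂Ω)} dω + ∫_{|ω|>k} ‖∇ₓu(·,ω)‖²_{L²(∂Ω)} dω ≤ C k^{−1} ( ‖f₀‖²_{(4)} + ‖f₁‖²_{(3)} ). -/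
open MeasureTheory Real Complex Filter

noncomputable section

/-- The Euclidean plane. -/
abbrev E2 : Type := EuclideanSpace ℝ (Fin 2)

/-- Bessel function `J₀` (power series, entire). -/
def besselJ0 (z : ℂ) : ℂ :=
  ∑' m : ℕ, ((-1 : ℂ) ^ m * (z / 2) ^ (2 * m)) / ((m.factorial : ℂ)) ^ 2

/-- Partial harmonic sum `1 + 1/2 + ⋯ + 1/m`. -/
def harmSum (m : ℕ) : ℂ := ∑ j ∈ Finset.range m, (1 : ℂ) / (j + 1)

/-- Bessel function `Y₀` (with the principal branch of the logarithm). -/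
def besselY0 (z : ℂ) : ℂ :=
  (2 / Real.pi) * (((Real.eulerMascheroniConstant : ℂ) + Complex.log (z / 2)) * besselJ0 z
    - ∑' m : ℕ, ((-1 : ℂ) ^ (m + 1) * (z / 2) ^ (2 * (m + 1)) * harmSum (m + 1)) /
        (((m + 1).factorial : ℂ)) ^ 2)

/-- Hankel function of the first kind of order zero, `H₀⁽¹⁾ = J₀ + iY₀`. -/
def hankelH0 (z : ℂ) : ℂ := besselJ0 z + Complex.I * besselY0 z

/-- The "conjugate" Hankel function `H̄₀⁽¹⁾ = J₀ − iY₀`. -/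
def hankelH0bar (z : ℂ) : ℂ := besselJ0 z - Complex.I * besselY0 z

/-- The radiating scattering solution of `(Δ + k²)u = −f₁ − i k f₀`:
`u(x,k) = (−i/4)∫_Ω H₀⁽¹⁾(k|x−y|)(f₁(y) + i k f₀(y)) dy`. -/
def scatSol (Ω : Set E2) (f₀ f₁ : E2 → ℝ) (x : E2) (k : ℂ) : ℂ :=
  (-Complex.I / 4) *
    ∫ y in Ω, hankelH0 (k * (‖x - y‖ : ℝ)) * ((f₁ y : ℂ) + Complex.I * k * (f₀ y : ℂ))

/-- Partial derivative of a real valued function in the `i`-th coordinate direction. -/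
def pd (i : Fin 2) (f : E2 → ℝ) : E2 → ℝ := fun x => fderiv ℝ f x (EuclideanSpace.single i 1)

/-- Squared Sobolev norm `‖f‖²_{(m)} = ∑_{|α|≤m} ∫ |∂^α f|²`. -/
def sobNormSq (m : ℕ) (f : E2 → ℝ) : ℝ :=
  ∑ α ∈ (Finset.range (m + 1) ×ˢ Finset.range (m + 1)).filter (fun α => α.1 + α.2 ≤ m),
    ∫ x : E2, ((pd 0)^[α.1] ((pd 1)^[α.2] f) x) ^ 2

/-- Squared euclidean norm of the gradient of a complex valued function on the plane. -/
def gradNormSq (g : E2 → ℂ) (x : E2) : ℝ :=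
  ∑ i : Fin 2, ‖fderiv ℝ g x (EuclideanSpace.single i 1)‖ ^ 2

/-- Squared euclidean norm of the gradient of a real valued function on the plane. -/
def gradNormSqR (g : E2 → ℝ) (x : E2) : ℝ :=
  ∑ i : Fin 2, (fderiv ℝ g x (EuclideanSpace.single i 1)) ^ 2

/-- Laplacian of a complex valued function on the plane (sum of pure second partials). -/
def lapC (g : E2 → ℂ) (x : E2) : ℂ :=
  ∑ i : Fin 2, fderiv ℝ (fun y => fderiv ℝ g y (EuclideanSpace.single i 1)) x
    (EuclideanSpace.single i 1)

/-- Laplacian of a real valued function on the plane. -/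
def lapR (g : E2 → ℝ) (x : E2) : ℝ :=
  ∑ i : Fin 2, fderiv ℝ (fun y => fderiv ℝ g y (EuclideanSpace.single i 1)) x
    (EuclideanSpace.single i 1)

/-- Laplacian of a real valued function on `ℂ ≅ ℝ²`. -/
def lapPlane (g : ℂ → ℝ) (z : ℂ) : ℝ :=
  fderiv ℝ (fun w => fderiv ℝ g w 1) z 1 +
    fderiv ℝ (fun w => fderiv ℝ g w Complex.I) z Complex.I

/-- `C²`-smooth boundary: near every boundary point, `Ω` is a sublevel set of a `C²`
defining function with nonvanishing gradient. -/
def HasC2Boundary (Ω : Set E2) : Prop :=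
  ∀ x ∈ frontier Ω, ∃ (U : Set E2) (g : E2 → ℝ), IsOpen U ∧ x ∈ U ∧ ContDiff ℝ 2 g ∧
    (∀ y ∈ U, fderiv ℝ g y ≠ 0) ∧ (Ω ∩ U = {y ∈ U | g y < 0}) ∧
    (frontier Ω ∩ U = {y ∈ U | g y = 0})

/-- Kirchhoff-type solution of the plane wave equation with initial data `(−f₀, f₁)`,
extended by zero to `t ≤ 0`. -/
def waveSol (f₀ f₁ : E2 → ℝ) (x : E2) (t : ℝ) : ℝ :=
  if t ≤ 0 then 0 else
    (1 / (2 * Real.pi)) * ∫ y in Metric.ball x t, f₁ y / Real.sqrt (t ^ 2 - ‖x - y‖ ^ 2)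
    - deriv (fun τ : ℝ =>
        (1 / (2 * Real.pi)) * ∫ y in Metric.ball x τ, f₀ y / Real.sqrt (τ ^ 2 - ‖x - y‖ ^ 2)) t

/-- The quantity `I₁(k)`: the contour integral (along the segment from `0` to `k`,
parametrized by `ω = ks`) of `2ω²∫_{∂Ω} u(x,ω)ū(x,ω)`. -/
def I1 (Ω : Set E2) (f₀ f₁ : E2 → ℝ) (k : ℂ) : ℂ :=
  2 * k * ∫ s in Set.Ioo (0 : ℝ) 1, (k * s) ^ 2 *
    ∫ x in frontier Ω,
      ((-Complex.I / 4) * ∫ y in Ω,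
        ((f₁ y : ℂ) + Complex.I * (k * s) * (f₀ y : ℂ)) * hankelH0 (k * s * (‖x - y‖ : ℝ))) *
      ((Complex.I / 4) * ∫ y in Ω,
        ((f₁ y : ℂ) - Complex.I * (k * s) * (f₀ y : ℂ)) * hankelH0bar (k * s * (‖x - y‖ : ℝ)))
      ∂(μH[1])

/-- The quantity `I₂(k)`: as `I₁(k)` but with the spatial gradients of the Hankel kernels,
paired by the dot product. -/
def I2 (Ω : Set E2) (f₀ f₁ : E2 → ℝ) (k : ℂ) : ℂ :=
  2 * k * ∫ s in Set.Ioo (0 : ℝ) 1, (k * s) ^ 2 *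
    ∫ x in frontier Ω,
      ∑ i : Fin 2,
        ((-Complex.I / 4) * ∫ y in Ω,
          ((f₁ y : ℂ) + Complex.I * (k * s) * (f₀ y : ℂ)) *
            fderiv ℝ (fun x' => hankelH0 (k * s * (‖x' - y‖ : ℝ))) x
              (EuclideanSpace.single i 1)) *
        ((Complex.I / 4) * ∫ y in Ω,
          ((f₁ y : ℂ) - Complex.I * (k * s) * (f₀ y : ℂ)) *
            fderiv ℝ (fun x' => hankelH0bar (k * s * (‖x' - y‖ : ℝ))) x
              (EuclideanSpace.single i 1))
      ∂(μH[1])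

end


/-!
The solution is a combination of the potentials `∫ F(y) H₀⁽¹⁾(ω|x-y|) dy` with densities `F = f₁`
and `F = f₀`, and the tail estimate follows once both integrands are shown to be `O(ω⁻²)`, uniformly
for `x` on the boundary.

* Boundedness of the kernel. For real `s ≠ 0`, `H₀⁽¹⁾(s) = w(s²/4)`, where `w` (which depends on the
  sign of `s` through the branch of the logarithm) solves `t w'' + w' + w = 0` for `t > 0`. The energy
  `t|w'|² + |w|²` has derivative `-|w'|²`, so `w` is bounded on `[1/4, ∞)`
  (`BesselPair.bounded`). Where `|x-y| > δ` and `δ|ω| ≥ 1` the argument is at least `1/4`. With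
  Cauchy–Schwarz on the bounded set `Ω`, the potential of `F` at `x` is at most a constant times
  `‖F‖_{L²}` (`norm_potential_le`).
* Decay. Off the diagonal the kernel satisfies `ΔK = -ω² K`. Since `F` vanishes near `x`,
  integration by parts gives `Pot(ΔF) = -ω² Pot(F)` (`potential_helmholtz`). Applied
  once to `f₁` and twice to `f₀` this yields `|ω u| = O(ω⁻¹)` in terms of at most two derivatives
  of `f₁` and four of `f₀`. A derivative in `x` falls on the density because the potential is a
  convolution (`hasFDerivAt_potential`), so `|∇u| = O(ω⁻¹)` in terms of three derivatives of
  `f₁` and `f₀` (`exists_pointwise_bound`). The surplus powers of `|ω|⁻¹` are at most powers of `δ`.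
* Integration. The boundary has finite length (`hausdorff_frontier_lt_top`): it is compact and
  locally the zero set of a function with nonvanishing gradient, on which projection along
  the gradient is antilipschitz. Finally `∫_{|ω|>k} ω⁻² dω = 2/k`.
-/


noncomputable section

/-! ### The Bessel equation in the variable `t = r² / 4` -/

/-- The power series `∑ c m * t ^ m`. -/
def pser (c : ℕ → ℝ) (t : ℝ) : ℝ := ∑' m, c m * t ^ m

lemma summable_pser {c : ℕ → ℝ} (hc : ∀ m, |c m| ≤ 1 / (m.factorial : ℝ)) (t : ℝ) :
    Summable fun m => c m * t ^ m := by
  refine Summable.of_norm_bounded (Real.summable_pow_div_factorial |t|) fun m => ?_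
  rw [norm_mul, norm_pow, Real.norm_eq_abs, Real.norm_eq_abs, div_eq_inv_mul, ← one_div]
  exact mul_le_mul_of_nonneg_right (hc m) (by positivity)

lemma succ_mul_le {c : ℕ → ℝ} (hc : ∀ m, |c m| ≤ 1 / (m.factorial : ℝ)) (m : ℕ) :
    |(m + 1) * c (m + 1)| ≤ 1 / (m.factorial : ℝ) := by
  have h := hc (m + 1)
  rw [abs_mul, abs_of_nonneg (by positivity : (0 : ℝ) ≤ m + 1)]
  rw [Nat.factorial_succ] at h
  push_cast at h
  calc (m + 1 : ℝ) * |c (m + 1)| ≤ (m + 1) * (1 / ((m + 1) * m.factorial)) := by gcongr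
    _ = 1 / (m.factorial : ℝ) := by
      have : (m.factorial : ℝ) ≠ 0 := by positivity
      field_simp

lemma hasDerivAt_pser {c : ℕ → ℝ} (hc : ∀ m, |c m| ≤ 1 / (m.factorial : ℝ)) (t : ℝ) :
    HasDerivAt (pser c) (pser (fun m => (m + 1) * c (m + 1)) t) t := by
  set R : ℝ := |t| + 1
  have hR : 0 ≤ R := by positivity
  have h := hasDerivAt_tsum_of_isPreconnected (𝕜 := ℝ) (F := ℝ)
    (u := fun m : ℕ => (m * |c m|) * R ^ (m - 1))
    (g := fun m z => c m * z ^ m) (g' := fun m z => c m * (m * z ^ (m - 1)))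
    (t := Metric.ball 0 R) (y₀ := 0) (y := t) ?_ Metric.isOpen_ball
    (convex_ball _ _).isPreconnected (fun m y _ => (hasDerivAt_pow m y).const_mul _) ?_
    (by simp [R]; positivity) (summable_pser hc 0) (by simp [R])
  · have e : ∑' m : ℕ, c m * (m * t ^ (m - 1)) = pser (fun m => (m + 1) * c (m + 1)) t := by
      have hs : Summable fun m : ℕ => c m * (m * t ^ (m - 1)) := by
        rw [← summable_nat_add_iff 1]
        refine (summable_pser (succ_mul_le hc) t).congr fun m => ?_
        rw [Nat.add_sub_cancel]; push_cast; ring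
      rw [hs.tsum_eq_zero_add, pser]
      simp only [Nat.cast_zero, zero_mul, mul_zero, zero_add, Nat.add_sub_cancel]
      congr 1; ext m; push_cast; ring
    rw [← e]; exact h
  · rw [← summable_nat_add_iff 1]
    refine Summable.of_norm_bounded (Real.summable_pow_div_factorial R) fun m => ?_
    have h1 := succ_mul_le hc m
    rw [abs_mul, abs_of_nonneg (by positivity : (0 : ℝ) ≤ m + 1)] at h1
    rw [Real.norm_of_nonneg (by positivity), div_eq_inv_mul, ← one_div]
    rw [Nat.add_sub_cancel]; push_cast
    exact mul_le_mul_of_nonneg_right h1 (by positivity)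
  · intro m y hy
    have hy' : |y| ≤ R := by simpa using (mem_ball_zero_iff.1 hy).le
    rw [norm_mul, norm_mul, norm_pow, Real.norm_eq_abs, Real.norm_eq_abs, Real.norm_eq_abs,
      abs_of_nonneg (Nat.cast_nonneg m : (0 : ℝ) ≤ m), ← mul_assoc, mul_comm |c m|]
    gcongr

/-- Taylor coefficients of `J₀(r)` in the variable `t = r² / 4`. -/
def cJ (m : ℕ) : ℝ := (-1) ^ m / (m.factorial : ℝ) ^ 2

/-- Harmonic numbers, as reals. -/
def harmR (m : ℕ) : ℝ := ∑ j ∈ Finset.range m, (1 : ℝ) / (j + 1)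

/-- Coefficients of the entire part of `Y₀(r)` in the variable `t = r² / 4`. -/
def cY (m : ℕ) : ℝ := (-1) ^ m * harmR m / (m.factorial : ℝ) ^ 2

lemma one_le_fact (m : ℕ) : (1 : ℝ) ≤ m.factorial := by
  exact_mod_cast Nat.succ_le_of_lt m.factorial_pos

lemma cJ_le (m : ℕ) : |cJ m| ≤ 1 / (m.factorial : ℝ) := by
  have h1 := one_le_fact m
  rw [cJ, abs_div, abs_pow, abs_neg, abs_one, one_pow, abs_of_nonneg (by positivity)]
  gcongr
  nlinarith

lemma harmR_nonneg (m : ℕ) : 0 ≤ harmR m := Finset.sum_nonneg fun _ _ => by positivity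

lemma harmR_le (m : ℕ) : harmR m ≤ m.factorial := by
  calc harmR m ≤ ∑ j ∈ Finset.range m, (1 : ℝ) := by
        refine Finset.sum_le_sum fun j _ => ?_
        rw [div_le_one (by positivity)]; linarith [(Nat.cast_nonneg j : (0 : ℝ) ≤ j)]
    _ = m := by simp
    _ ≤ m.factorial := by exact_mod_cast m.self_le_factorial

lemma cY_le (m : ℕ) : |cY m| ≤ 1 / (m.factorial : ℝ) := by
  have h1 := one_le_fact m
  rw [cY, abs_div, abs_mul, abs_pow, abs_neg, abs_one, one_pow, one_mul,
    abs_of_nonneg (harmR_nonneg m), abs_of_nonneg (by positivity)]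
  rw [div_le_div_iff₀ (by positivity) (by positivity), one_mul, sq]
  exact mul_le_mul_of_nonneg_right (harmR_le m) (by positivity)

/-- Shifted-coefficient sequence of the derived power series. -/
def dcoef (c : ℕ → ℝ) (m : ℕ) : ℝ := (m + 1) * c (m + 1)

/-- If the coefficients satisfy the recursion `(m+1)² c (m+1) + c m = d m`, the series solves
`t a'' + a' + a = ∑ d m * t ^ m`. -/
lemma pser_ode {c d : ℕ → ℝ} (hc : ∀ m, |c m| ≤ 1 / (m.factorial : ℝ))
    (hrec : ∀ m : ℕ, ((m : ℝ) + 1) ^ 2 * c (m + 1) + c m = d m) (t : ℝ) :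
    t * pser (dcoef (dcoef c)) t + pser (dcoef c) t + pser c t = pser d t := by
  have h1 : ∀ m, |dcoef c m| ≤ 1 / (m.factorial : ℝ) := succ_mul_le hc
  have h2 : ∀ m, |dcoef (dcoef c) m| ≤ 1 / (m.factorial : ℝ) := succ_mul_le h1
  have e : t * pser (dcoef (dcoef c)) t = ∑' m : ℕ, (m * dcoef c m) * t ^ m := by
    have hs : Summable fun m : ℕ => (m * dcoef c m) * t ^ m := by
      rw [← summable_nat_add_iff 1]
      refine ((summable_pser h2 t).mul_left t).congr fun m => ?_
      rw [dcoef]; push_cast; ring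
    rw [hs.tsum_eq_zero_add, pser, ← tsum_mul_left]
    simp only [Nat.cast_zero, zero_mul, zero_add]
    congr 1; ext m; rw [dcoef]; push_cast; ring
  have hs : Summable fun m : ℕ => (m * dcoef c m) * t ^ m := by
    rw [← summable_nat_add_iff 1]
    refine ((summable_pser h2 t).mul_left t).congr fun m => ?_
    rw [dcoef]; push_cast; ring
  rw [e, pser, pser, pser, ← hs.tsum_add (summable_pser h1 t),
    ← (hs.add (summable_pser h1 t)).tsum_add (summable_pser hc t)]
  congr 1; ext m
  rw [← hrec m, dcoef]; ring

lemma cJ_rec (m : ℕ) : ((m : ℝ) + 1) ^ 2 * cJ (m + 1) + cJ m = 0 := by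
  have : (m.factorial : ℝ) ≠ 0 := by positivity
  rw [cJ, cJ, Nat.factorial_succ]; push_cast
  field_simp
  ring

lemma cY_rec (m : ℕ) : ((m : ℝ) + 1) ^ 2 * cY (m + 1) + cY m = dcoef cJ m := by
  have : (m.factorial : ℝ) ≠ 0 := by positivity
  have h : harmR (m + 1) = harmR m + 1 / (m + 1) := by rw [harmR, Finset.sum_range_succ]; rfl
  rw [cY, cY, dcoef, cJ, h, Nat.factorial_succ]; push_cast
  field_simp
  ring

/-- `Y₀(r) = (2/π) yfun (r² / 4)` for `r > 0`. -/
def yfun (t : ℝ) : ℝ := (Real.eulerMascheroniConstant + Real.log t / 2) * pser cJ t - pser cY t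

/-- The derivative of `yfun` on the positive half-line. -/
def yfun' (t : ℝ) : ℝ := 1 / (2 * t) * pser cJ t +
  (Real.eulerMascheroniConstant + Real.log t / 2) * pser (dcoef cJ) t - pser (dcoef cY) t

/-- A pair `(w, w₁)` with `w' = w₁` and `t w₁' + w₁ + w = 0` on the positive half-line: the Bessel
equation of order zero in the variable `t = r² / 4`. -/
def BesselPair (w w₁ : ℝ → ℂ) : Prop :=
  ∀ t, 0 < t → HasDerivAt w (w₁ t) t ∧ HasDerivAt w₁ (-(w₁ t + w t) / t) t

lemma BesselPair.lincomb {w w₁ v v₁ : ℝ → ℂ} (h : BesselPair w w₁) (h' : BesselPair v v₁)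
    (a b : ℂ) : BesselPair (fun t => a * w t + b * v t) (fun t => a * w₁ t + b * v₁ t) := by
  intro t ht
  refine ⟨((h t ht).1.const_mul a).add ((h' t ht).1.const_mul b),
    (((h t ht).2.const_mul a).add ((h' t ht).2.const_mul b)).congr_deriv ?_⟩
  ring

lemma besselPair_J : BesselPair (fun t => (pser cJ t : ℂ)) (fun t => (pser (dcoef cJ) t : ℂ)) := by
  intro t ht
  refine ⟨(hasDerivAt_pser cJ_le t).ofReal_comp, ?_⟩
  have h1 : ∀ m, |dcoef cJ m| ≤ 1 / (m.factorial : ℝ) := succ_mul_le cJ_le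
  refine (hasDerivAt_pser h1 t).ofReal_comp.congr_deriv ?_
  have := pser_ode (d := fun _ => 0) cJ_le cJ_rec t
  have h0 : pser (fun _ => 0) t = 0 := by simp [pser]
  rw [h0] at this
  rw [eq_div_iff (by exact_mod_cast ht.ne')]
  change ((pser (dcoef (dcoef cJ)) t : ℝ) : ℂ) * _ = _
  have h2 : pser (dcoef (dcoef cJ)) t * t = -(pser (dcoef cJ) t + pser cJ t) := by linarith
  beta_reduce
  exact_mod_cast h2

lemma besselPair_Y : BesselPair (fun t => (yfun t : ℂ)) (fun t => (yfun' t : ℂ)) := by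
  intro t ht
  have dJ := hasDerivAt_pser cJ_le t
  have dY := hasDerivAt_pser cY_le t
  have h1 : ∀ m, |dcoef cJ m| ≤ 1 / (m.factorial : ℝ) := succ_mul_le cJ_le
  have h2 : ∀ m, |dcoef cY m| ≤ 1 / (m.factorial : ℝ) := succ_mul_le cY_le
  have dJ' := hasDerivAt_pser h1 t
  have dY' := hasDerivAt_pser h2 t
  have dl : HasDerivAt (fun t => Real.eulerMascheroniConstant + Real.log t / 2)
      (t⁻¹ / 2) t := ((Real.hasDerivAt_log ht.ne').div_const 2).const_add _
  have di : HasDerivAt (fun t : ℝ => 1 / (2 * t)) (-(1 / (2 * t ^ 2))) t := by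
    have := ((hasDerivAt_id t).const_mul 2).inv (by simpa using ht.ne')
    refine (this.congr_deriv ?_).congr_of_eventuallyEq (.of_forall fun s => ?_)
    · simp only [id]; field_simp
    · simp
  refine ⟨?_, ?_⟩
  · have h : HasDerivAt yfun (yfun' t) t := by
      refine ((dl.mul dJ).sub dY).congr_deriv ?_
      change t⁻¹ / 2 * pser cJ t + (Real.eulerMascheroniConstant + Real.log t / 2) *
        pser (dcoef cJ) t - pser (dcoef cY) t = _
      rw [yfun']
      have := ht.ne'
      field_simp
    exact h.ofReal_comp
  · have h : HasDerivAt yfun' (-(yfun' t + yfun t) / t) t := by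
      refine (((di.mul dJ).add (dl.mul dJ')).sub dY').congr_deriv ?_
      have oJ := pser_ode (d := fun _ => 0) cJ_le cJ_rec t
      have h0 : pser (fun _ => 0) t = 0 := by simp [pser]
      rw [h0] at oJ
      have oY := pser_ode cY_le cY_rec t
      change -(1 / (2 * t ^ 2)) * pser cJ t + 1 / (2 * t) * pser (dcoef cJ) t +
        (t⁻¹ / 2 * pser (dcoef cJ) t + (Real.eulerMascheroniConstant + Real.log t / 2) *
          pser (dcoef (dcoef cJ)) t) - pser (dcoef (dcoef cY)) t = _
      rw [eq_div_iff ht.ne', yfun, yfun']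
      generalize Real.eulerMascheroniConstant + Real.log t / 2 = l
      have e : (-(1 / (2 * t ^ 2)) * pser cJ t + 1 / (2 * t) * pser (dcoef cJ) t +
        (t⁻¹ / 2 * pser (dcoef cJ) t + l *
          pser (dcoef (dcoef cJ)) t) - pser (dcoef (dcoef cY)) t) * t =
          -(1 / (2 * t)) * pser cJ t + pser (dcoef cJ) t + l * (t * pser (dcoef (dcoef cJ)) t) -
            t * pser (dcoef (dcoef cY)) t := by
        have := ht.ne'
        field_simp
        ring
      rw [e]
      linear_combination l * oJ - oY
    have hc := h.ofReal_comp
    push_cast at hc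
    exact hc

/-- The energy `t |w'|² + |w|²` decreases along solutions, so solutions are bounded away
from `0`. -/
lemma BesselPair.bounded {w w₁ : ℝ → ℂ} (h : BesselPair w w₁) :
    ∃ M : ℝ, 0 ≤ M ∧ ∀ t, 1 / 4 ≤ t → ‖w t‖ ≤ M := by
  set E : ℝ → ℝ := fun t => t * ‖w₁ t‖ ^ 2 + ‖w t‖ ^ 2
  have hE : ∀ t, 0 < t → HasDerivAt E (-‖w₁ t‖ ^ 2) t := by
    intro t ht
    have := ((hasDerivAt_id t).mul (h t ht).2.norm_sq).add (h t ht).1.norm_sq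
    refine this.congr_deriv ?_
    have e : (-(w₁ t + w t) / (t : ℂ)) = (-(1 / t) : ℝ) • (w₁ t + w t) := by
      rw [Complex.real_smul]; push_cast; ring
    rw [e, inner_smul_right, inner_add_right, real_inner_self_eq_norm_sq,
      real_inner_comm (w₁ t) (w t)]
    have := ht.ne'
    simp only [id]
    field_simp
    ring
  have hanti : AntitoneOn E (Set.Ioi 0) := by
    refine antitoneOn_of_deriv_nonpos (convex_Ioi 0)
      (fun t ht => (hE t ht).continuousAt.continuousWithinAt) ?_ ?_
    · rw [interior_Ioi]; exact fun t ht => (hE t ht).differentiableAt.differentiableWithinAt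
    · rw [interior_Ioi]; intro t ht; rw [(hE t ht).deriv]; simp
  refine ⟨Real.sqrt (E (1 / 4)), Real.sqrt_nonneg _, fun t ht => ?_⟩
  have ht0 : 0 < t := by linarith
  refine Real.le_sqrt_of_sq_le (le_trans ?_ (hanti (by norm_num) ht0 ht))
  have : 0 ≤ t * ‖w₁ t‖ ^ 2 := by positivity
  simp only [E]; linarith

lemma besselJ0_real (s : ℝ) : besselJ0 s = (pser cJ (s ^ 2 / 4) : ℝ) := by
  rw [besselJ0, pser, Complex.ofReal_tsum]
  congr 1; ext m
  rw [cJ, pow_mul]; push_cast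
  rw [show ((s : ℂ) / 2) ^ 2 = (s : ℂ) ^ 2 / 4 by ring]
  ring

lemma log_half (s : ℝ) (hs : s ≠ 0) :
    Complex.log ((s : ℂ) / 2) = (Real.log (s ^ 2 / 4) / 2 : ℝ) +
      (if 0 < s then 0 else (Real.pi : ℂ) * Complex.I) := by
  have e : Real.log (s ^ 2 / 4) / 2 = Real.log (s / 2) := by
    rw [show s ^ 2 / 4 = (s / 2) ^ 2 by ring, Real.log_pow]; push_cast; ring
  have e2 : (s : ℂ) / 2 = ((s / 2 : ℝ) : ℂ) := by push_cast; rfl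
  rw [e, e2, Complex.log, Complex.norm_real, Real.norm_eq_abs, Real.log_abs]
  split_ifs with h
  · rw [Complex.arg_ofReal_of_nonneg (by positivity)]; simp
  · have : s / 2 < 0 := by
      have := lt_of_le_of_ne (not_lt.1 h) hs
      linarith
    rw [Complex.arg_ofReal_of_neg this]

/-- On the negative axis the principal logarithm adds the term `2 i J₀`. -/
lemma besselY0_real (s : ℝ) (hs : s ≠ 0) :
    besselY0 s = ((2 : ℂ) / Real.pi) * (yfun (s ^ 2 / 4) : ℝ) +
    (if 0 < s then 0 else 2 * Complex.I : ℂ) * (pser cJ (s ^ 2 / 4) : ℝ) := by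
  have hS : ∑' m : ℕ, ((-1 : ℂ) ^ (m + 1) * ((s : ℂ) / 2) ^ (2 * (m + 1)) * harmSum (m + 1)) /
        (((m + 1).factorial : ℂ)) ^ 2 = ((pser cY (s ^ 2 / 4) : ℝ) : ℂ) := by
    rw [pser, (summable_pser cY_le _).tsum_eq_zero_add]
    have : cY 0 = 0 := by simp [cY, harmR]
    rw [this, zero_mul, zero_add, Complex.ofReal_tsum]
    congr 1; ext m
    rw [cY, pow_mul, harmSum, harmR]; push_cast
    rw [show ((s : ℂ) / 2) ^ 2 = (s : ℂ) ^ 2 / 4 by ring]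
    ring
  have hpi : (Real.pi : ℂ) ≠ 0 := by exact_mod_cast Real.pi_ne_zero
  rw [besselY0, besselJ0_real, hS, log_half s hs, yfun]
  push_cast
  split_ifs
  · ring
  · field_simp
    ring

/-- The function `w` with `H₀⁽¹⁾(s) = w (s² / 4)` for real `s` of sign `σ`; on the negative axis
the principal logarithm turns `J₀ + i Y₀` into `-J₀ + i Y₀`. -/
def wfun (σ t : ℝ) : ℂ := σ * (pser cJ t : ℝ) + (Complex.I * (2 / Real.pi)) * (yfun t : ℝ)

/-- The derivative of `wfun σ` on the positive half-line. -/
def wfun' (σ t : ℝ) : ℂ :=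
  σ * (pser (dcoef cJ) t : ℝ) + (Complex.I * (2 / Real.pi)) * (yfun' t : ℝ)

lemma besselPair_wfun (σ : ℝ) : BesselPair (wfun σ) (wfun' σ) :=
  besselPair_J.lincomb besselPair_Y _ _

lemma hankelH0_real (s : ℝ) (hs : s ≠ 0) :
    hankelH0 s = wfun (if 0 < s then 1 else -1) (s ^ 2 / 4) := by
  rw [hankelH0, besselJ0_real, besselY0_real s hs, wfun]
  split_ifs
  · push_cast; ring
  · push_cast
    linear_combination (2 * (pser cJ (s ^ 2 / 4) : ℂ)) * Complex.I_mul_I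

/-! ### Finite length of the boundary -/

/-- A bounded subset of the plane on which a linear functional is antilipschitz has finite
length. -/
lemma hausdorff_lt_top_of_antilipschitz {S : Set E2} (hS : Bornology.IsBounded S) (K : NNReal)
    (M : E2 →L[ℝ] ℝ) (h : ∀ y ∈ S, ∀ z ∈ S, ‖y - z‖ ≤ K * |M (y - z)|) :
    μH[1] S < ⊤ := by
  have hanti : AntilipschitzWith K (fun y : S => M y) := by
    refine AntilipschitzWith.of_le_mul_dist fun y z => ?_
    rw [Subtype.dist_eq, dist_eq_norm, Real.dist_eq, ← map_sub]
    exact h y y.2 z z.2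
  have h1 := hanti.le_hausdorffMeasure_image (d := 1) zero_le_one Set.univ
  have h2 := (isometry_subtype_coe (s := S)).hausdorffMeasure_image (d := 1)
    (Or.inl zero_le_one) Set.univ
  rw [Set.image_univ, Subtype.range_coe] at h2
  rw [h2]
  refine h1.trans_lt (ENNReal.mul_lt_top (by simp) ?_)
  rw [hausdorffMeasure_real]
  have e : Set.image (fun y : S => M y) Set.univ = Set.image M S := by
    ext r; simp
  rw [e]
  exact (M.lipschitz.isBounded_image hS).measure_lt_top

lemma hausdorff_frontier_lt_top {Ω : Set E2} (hb : Bornology.IsBounded Ω) (h2 : HasC2Boundary Ω) :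
    μH[1] (frontier Ω) < ⊤ := by
  have hfb : Bornology.IsBounded (frontier Ω) := hb.closure.subset frontier_subset_closure
  refine (Metric.isCompact_of_isClosed_isBounded isClosed_frontier hfb).measure_lt_top_of_nhdsWithin
    fun x hx => ?_
  obtain ⟨U, g, hUo, hxU, hg, hgU, -, hfU⟩ := h2 x hx
  set L := fderiv ℝ g x
  have hL0 : L ≠ 0 := hgU x hxU
  set a := L (EuclideanSpace.single 0 1)
  set b := L (EuclideanSpace.single 1 1)
  have hLw : ∀ w : E2, L w = a * w 0 + b * w 1 := by
    intro w
    have e : w = w 0 • (EuclideanSpace.single 0 1 : E2) + w 1 • EuclideanSpace.single 1 1 := by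
      ext i; fin_cases i <;> simp
    conv_lhs => rw [e]
    rw [map_add, map_smul, map_smul, smul_eq_mul, smul_eq_mul]; ring
  -- The functional `M` is the component along the rotated gradient.
  set M : E2 →L[ℝ] ℝ := a • EuclideanSpace.proj (1 : Fin 2) - b • EuclideanSpace.proj (0 : Fin 2)
  have hMw : ∀ w : E2, M w = a * w 1 - b * w 0 := fun w => by simp [M]
  have hab : 0 < a ^ 2 + b ^ 2 := by
    by_contra hn
    have ha : a = 0 := by nlinarith [sq_nonneg a, sq_nonneg b]
    have hb : b = 0 := by nlinarith [sq_nonneg a, sq_nonneg b]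
    exact hL0 (by ext w; rw [hLw, ha, hb]; simp)
  set n := Real.sqrt (a ^ 2 + b ^ 2)
  have hn : 0 < n := Real.sqrt_pos.2 hab
  have hn2 : n ^ 2 = a ^ 2 + b ^ 2 := Real.sq_sqrt hab.le
  obtain ⟨s, hs, hap⟩ := (hg.contDiffAt.hasStrictFDerivAt (x := x)
    two_ne_zero).approximates_deriv_on_nhds (c := ⟨n / 2, by positivity⟩)
      (Or.inr (by exact_mod_cast half_pos hn))
  refine ⟨frontier Ω ∩ U ∩ s, ?_, ?_⟩
  · rw [Set.inter_assoc]
    exact Filter.inter_mem self_mem_nhdsWithin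
      (mem_nhdsWithin_of_mem_nhds (Filter.inter_mem (hUo.mem_nhds hxU) hs))
  · refine hausdorff_lt_top_of_antilipschitz
      (hfb.subset fun y hy => hy.1.1) ⟨2 / n, by positivity⟩ M ?_
    rintro y ⟨hy, hys⟩ z ⟨hz, hzs⟩
    rw [hfU] at hy hz
    have h3 := hap y hys z hzs
    rw [hy.2, hz.2, sub_self, zero_sub, norm_neg, Real.norm_eq_abs] at h3
    change |L (y - z)| ≤ n / 2 * ‖y - z‖ at h3
    change ‖y - z‖ ≤ 2 / n * |M (y - z)|
    set w := y - z
    have h4 : (L w) ^ 2 + (M w) ^ 2 = n ^ 2 * ‖w‖ ^ 2 := by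
      rw [hLw, hMw, hn2, EuclideanSpace.real_norm_sq_eq, Fin.sum_univ_two]; ring
    have h5 : (L w) ^ 2 ≤ (n / 2 * ‖w‖) ^ 2 := by
      rw [← sq_abs (L w)]; gcongr
    have h6 : n / 2 * ‖w‖ ≤ |M w| := by
      refine abs_le_of_sq_le_sq' ?_ (abs_nonneg _) |>.2
      rw [sq_abs]
      nlinarith [sq_nonneg (n * ‖w‖)]
    calc ‖w‖ = 2 / n * (n / 2 * ‖w‖) := by field_simp
      _ ≤ 2 / n * |M w| := by gcongr

/-! ### Integration by parts against the Hankel kernel -/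

/-- The radial kernel `z ↦ w ((ω ‖z‖)² / 4)`, a Hankel kernel for `w = wfun (± 1)`. -/
def radialKer (w : ℝ → ℂ) (ω : ℝ) (z : E2) : ℂ := w ((ω * ‖z‖) ^ 2 / 4)

/-- The potential with density `F` and kernel `radialKer w ω`. -/
def potential (w : ℝ → ℂ) (ω : ℝ) (F : E2 → ℝ) (x : E2) : ℂ := ∫ y, F y • radialKer w ω (x - y)

/-- Smooth densities supported in `Ω`, at distance more than `δ` from the observation
point `x`. -/
structure Admissible (Ω : Set E2) (δ : ℝ) (x : E2) (F : E2 → ℝ) : Prop where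
  smooth : ContDiff ℝ (⊤ : ℕ∞) F
  compact : HasCompactSupport F
  subset : tsupport F ⊆ Ω
  far : ∀ y ∈ tsupport F, δ < ‖x - y‖

lemma tsupport_pd_subset (i : Fin 2) (F : E2 → ℝ) : tsupport (pd i F) ⊆ tsupport F :=
  tsupport_fderiv_apply_subset ℝ _

lemma contDiff_pd {F : E2 → ℝ} (hF : ContDiff ℝ (⊤ : ℕ∞) F) (i : Fin 2) :
    ContDiff ℝ (⊤ : ℕ∞) (pd i F) :=
  (hF.fderiv_right (m := (⊤ : ℕ∞)) (by exact_mod_cast le_top)).clm_apply contDiff_const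

lemma Admissible.pd {Ω : Set E2} {δ : ℝ} {x : E2} {F : E2 → ℝ} (h : Admissible Ω δ x F)
    (i : Fin 2) : Admissible Ω δ x (pd i F) where
  smooth := contDiff_pd h.smooth i
  compact := h.compact.mono' ((subset_tsupport _).trans (tsupport_pd_subset i F))
  subset := (tsupport_pd_subset i F).trans h.subset
  far y hy := h.far y (tsupport_pd_subset i F hy)

lemma Admissible.notMem {Ω : Set E2} {δ : ℝ} {x : E2} {F : E2 → ℝ} (h : Admissible Ω δ x F)
    (hδ : 0 < δ) : tsupport F ⊆ {x}ᶜ := by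
  rintro y hy rfl
  have := h.far y hy
  simp at this; linarith

lemma Admissible.eventually {Ω : Set E2} {δ : ℝ} {x : E2} {F : E2 → ℝ}
    (h : Admissible Ω δ x F) : ∀ᶠ x' in nhds x, Admissible Ω δ x' F := by
  have : ∀ᶠ x' in nhds x, ∀ y ∈ tsupport F, δ < ‖x' - y‖ := by
    refine h.compact.isCompact.eventually_forall_of_forall_eventually fun y hy => ?_
    exact (isOpen_lt continuous_const (by fun_prop :
      Continuous fun p : E2 × E2 => ‖p.1 - p.2‖)).mem_nhds (h.far y hy)
  filter_upwards [this] with x' hx'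
  exact ⟨h.smooth, h.compact, h.subset, hx'⟩

lemma pd_comm {F : E2 → ℝ} (hF : ContDiff ℝ (⊤ : ℕ∞) F) (i j : Fin 2) :
    pd i (pd j F) = pd j (pd i F) := by
  ext x
  have h2 : (2 : WithTop ℕ∞) ≤ ((⊤ : ℕ∞) : WithTop ℕ∞) :=
    WithTop.coe_le_coe.2 (le_top : (2 : ℕ∞) ≤ ⊤)
  have hd : DifferentiableAt ℝ (fderiv ℝ F) x :=
    ((hF.fderiv_right (m := 1) (by rwa [one_add_one_eq_two])).differentiable one_ne_zero) x
  have hs : IsSymmSndFDerivAt ℝ F x :=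
    hF.contDiffAt.isSymmSndFDerivAt (by rwa [minSmoothness_of_isRCLikeNormedField])
  have e : ∀ i j : Fin 2, pd i (pd j F) x = fderiv ℝ (fderiv ℝ F) x (EuclideanSpace.single i 1)
      (EuclideanSpace.single j 1) := by
    intro i j
    change fderiv ℝ (fun x => fderiv ℝ F x (EuclideanSpace.single j 1)) x _ = _
    rw [fderiv_clm_apply hd (differentiableAt_const _)]
    simp
  rw [e, e, hs.eq]

lemma integrable_smul_of_continuousOn {F : E2 → ℝ} {K : E2 → ℂ} {x : E2} (hF : Continuous F)
    (hFc : HasCompactSupport F) (hx : tsupport F ⊆ {x}ᶜ) (hK : ContinuousOn K {x}ᶜ) :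
    Integrable fun y => F y • K y :=
  ((hF.continuousOn.smul hK).continuous_of_tsupport_subset isOpen_compl_singleton
    ((tsupport_smul_subset_left F K).trans hx)).integrable_of_hasCompactSupport hFc.smul_right

/-- One integration by parts. The kernel `K` may be singular at `x`, away from the support of the
density. -/
lemma integral_pd_smul {F : E2 → ℝ} {K K' : E2 → ℂ} {x : E2} (i : Fin 2)
    (hF : ContDiff ℝ (⊤ : ℕ∞) F)
    (hFc : HasCompactSupport F) (hx : tsupport F ⊆ {x}ᶜ) (hK : ContinuousOn K {x}ᶜ)
    (hK' : ContinuousOn K' {x}ᶜ)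
    (hd : ∀ y ∈ ({x} : Set E2)ᶜ, HasLineDerivAt ℝ K (K' y) y (EuclideanSpace.single i 1)) :
    ∫ y, pd i F y • K y = -∫ y, F y • K' y := by
  have hF1 := contDiff_pd hF i
  have hFc1 : HasCompactSupport (pd i F) :=
    hFc.mono' ((subset_tsupport _).trans (tsupport_pd_subset i F))
  exact integral_bilinear_hasLineDerivAt_right_eq_neg_left_of_integrable
    (B := (ContinuousLinearMap.lsmul ℝ ℝ : ℝ →L[ℝ] ℂ →L[ℝ] ℂ).flip) (f := K) (g := F)
    (f' := K') (g' := pd i F) (v := EuclideanSpace.single i 1) (μ := volume)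
    (integrable_smul_of_continuousOn hF.continuous hFc hx hK')
    (integrable_smul_of_continuousOn hF1.continuous hFc1 ((tsupport_pd_subset i F).trans hx) hK)
    (integrable_smul_of_continuousOn hF.continuous hFc hx hK)
    (fun y hy => hd y (hx hy))
    (fun y _ => ((hF.differentiable (by simp)) y).hasFDerivAt.hasLineDerivAt _)

lemma phase_pos {ω : ℝ} (hω : ω ≠ 0) {z : E2} (hz : z ≠ 0) : 0 < (ω * ‖z‖) ^ 2 / 4 := by
  have : 0 < ‖z‖ := norm_pos_iff.2 hz
  positivity

lemma phase_line (ω : ℝ) (x y : E2) (i : Fin 2) (t : ℝ) :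
    (ω * ‖x - (y + t • EuclideanSpace.single i (1 : ℝ))‖) ^ 2 / 4 =
      (ω * ‖x - y‖) ^ 2 / 4 + ω ^ 2 / 2 * (y i - x i) * t + ω ^ 2 / 4 * t ^ 2 := by
  rw [mul_pow, mul_pow, EuclideanSpace.real_norm_sq_eq, EuclideanSpace.real_norm_sq_eq,
    Fin.sum_univ_two, Fin.sum_univ_two]
  fin_cases i <;> simp <;> ring

lemma hasLineDerivAt_comp_phase {w : ℝ → ℂ} {w' : ℂ} {ω : ℝ} {x y : E2}
    (hw : HasDerivAt w w' ((ω * ‖x - y‖) ^ 2 / 4)) (i : Fin 2) :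
    HasLineDerivAt ℝ (fun y => w ((ω * ‖x - y‖) ^ 2 / 4)) ((ω ^ 2 / 2 * (y i - x i)) • w') y
      (EuclideanSpace.single i 1) := by
  have hq : HasDerivAt (fun t : ℝ => (ω * ‖x - (y + t • EuclideanSpace.single i (1 : ℝ))‖) ^ 2 / 4)
      (ω ^ 2 / 2 * (y i - x i)) 0 := by
    simp_rw [phase_line]
    have := (((hasDerivAt_id (0 : ℝ)).const_mul (ω ^ 2 / 2 * (y i - x i))).const_add
      ((ω * ‖x - y‖) ^ 2 / 4)).add ((hasDerivAt_pow 2 (0 : ℝ)).const_mul (ω ^ 2 / 4))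
    exact this.congr_deriv (by simp)
  exact HasDerivAt.scomp (h := fun t : ℝ =>
    (ω * ‖x - (y + t • EuclideanSpace.single i (1 : ℝ))‖) ^ 2 / 4) 0 (by simpa using hw) hq

lemma continuousOn_comp_phase {w : ℝ → ℂ} {ω : ℝ} (hω : ω ≠ 0) (x : E2)
    (hw : ContinuousOn w (Set.Ioi 0)) :
    ContinuousOn (fun y => w ((ω * ‖x - y‖) ^ 2 / 4)) {x}ᶜ := by
  refine hw.comp (by fun_prop) fun y hy => phase_pos hω (sub_ne_zero.2 fun h => hy h.symm)

/-- The kernel satisfies the Helmholtz equation `ΔK = -ω² K` off the diagonal, so two integrations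
by parts give `Pot (ΔF) = -ω² Pot F`. -/
lemma potential_helmholtz {w w₁ : ℝ → ℂ} (h : BesselPair w w₁) {ω : ℝ} (hω : ω ≠ 0)
    {Ω : Set E2} {δ : ℝ} (hδ : 0 < δ) {x : E2} {F : E2 → ℝ} (hF : Admissible Ω δ x F) :
    potential w ω (pd 0 (pd 0 F)) x + potential w ω (pd 1 (pd 1 F)) x =
      -((ω : ℂ) ^ 2) * potential w ω F x := by
  have cw : ContinuousOn w (Set.Ioi 0) :=
    fun t ht => (h t ht).1.continuousAt.continuousWithinAt
  have cw1 : ContinuousOn w₁ (Set.Ioi 0) :=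
    fun t ht => (h t ht).2.continuousAt.continuousWithinAt
  set w₂ : ℝ → ℂ := fun t => -(w₁ t + w t) / t
  have cw2 : ContinuousOn w₂ (Set.Ioi 0) :=
    ContinuousOn.div (cw1.add cw).neg Complex.continuous_ofReal.continuousOn
      fun t ht => by exact_mod_cast (ne_of_gt ht)
  set q : E2 → ℝ := fun y => (ω * ‖x - y‖) ^ 2 / 4
  have hq : ∀ y ∈ ({x} : Set E2)ᶜ, 0 < q y := fun y hy =>
    phase_pos hω (sub_ne_zero.2 fun h => hy h.symm)
  have k0 : ContinuousOn (fun y => w (q y)) {x}ᶜ := continuousOn_comp_phase hω x cw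
  have k1 : ∀ i : Fin 2, ContinuousOn (fun y => (ω ^ 2 / 2 * (y i - x i)) • w₁ (q y)) {x}ᶜ :=
    fun i => (show ContinuousOn (fun y : E2 => ω ^ 2 / 2 * (y i - x i)) {x}ᶜ by fun_prop).smul
      (continuousOn_comp_phase hω x cw1)
  have k2 : ∀ i : Fin 2, ContinuousOn (fun y => (ω ^ 2 / 2) • w₁ (q y) +
      (ω ^ 2 / 2 * (y i - x i)) ^ 2 • w₂ (q y)) {x}ᶜ := fun i =>
    ((continuousOn_comp_phase hω x cw1).const_smul (ω ^ 2 / 2)).add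
      ((show ContinuousOn (fun y : E2 => (ω ^ 2 / 2 * (y i - x i)) ^ 2) {x}ᶜ by fun_prop).smul
        (continuousOn_comp_phase hω x cw2))
  have step : ∀ i : Fin 2, potential w ω (pd i (pd i F)) x = ∫ y, F y • ((ω ^ 2 / 2) • w₁ (q y) +
      (ω ^ 2 / 2 * (y i - x i)) ^ 2 • w₂ (q y)) := by
    intro i
    have e1 := integral_pd_smul i (hF.pd i).smooth (hF.pd i).compact ((hF.pd i).notMem hδ) k0 (k1 i)
      fun y hy => hasLineDerivAt_comp_phase (h _ (hq y hy)).1 i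
    have e2 := integral_pd_smul i hF.smooth hF.compact (hF.notMem hδ) (k1 i) (k2 i) fun y hy => by
      have d1 := hasLineDerivAt_comp_phase (x := x) (h _ (hq y hy)).2 i
      have d2 : HasDerivAt (fun t : ℝ => ω ^ 2 / 2 * ((y + t • (EuclideanSpace.single i 1 : E2)) i
          - x i)) (ω ^ 2 / 2) 0 := by
        have e : ∀ t : ℝ, ω ^ 2 / 2 * ((y + t • (EuclideanSpace.single i 1 : E2)) i - x i) =
            ω ^ 2 / 2 * (y i - x i) + ω ^ 2 / 2 * t := fun t => by simp; ring
        simp_rw [e]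
        exact (((hasDerivAt_id (0 : ℝ)).const_mul (ω ^ 2 / 2)).const_add _).congr_deriv (by simp)
      refine HasDerivAt.congr_deriv (HasDerivAt.smul d2 d1) ?_
      simp only [zero_smul, add_zero, smul_smul, w₂, q]
      rw [add_comm, ← sq (ω ^ 2 / 2 * (y i - x i))]
    rw [e2, neg_neg] at e1
    exact e1
  rw [step, step, ← integral_add
    (integrable_smul_of_continuousOn hF.smooth.continuous hF.compact (hF.notMem hδ) (k2 0))
    (integrable_smul_of_continuousOn hF.smooth.continuous hF.compact (hF.notMem hδ) (k2 1)),
    potential, ← integral_const_mul]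
  refine integral_congr_ae (.of_forall fun y => ?_)
  by_cases hy : y ∈ tsupport F
  · have hy' : y ∈ ({x} : Set E2)ᶜ := hF.notMem hδ hy
    have hqy : ((q y : ℝ) : ℂ) ≠ 0 := by exact_mod_cast (hq y hy').ne'
    have e : ((q y : ℝ) : ℂ) = (ω : ℂ) ^ 2 / 4 * (((y 0 : ℂ) - x 0) ^ 2 + ((y 1 : ℂ) - x 1) ^ 2) := by
      simp only [q]
      rw [mul_pow, EuclideanSpace.real_norm_sq_eq, Fin.sum_univ_two]
      simp only [PiLp.sub_apply]
      push_cast; ring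
    have hw2 : q y * w₂ (q y) = -(w₁ (q y) + w (q y)) := by
      simp only [w₂]; field_simp
    change F y • _ + F y • _ = -((ω : ℂ) ^ 2) * (F y • w (q y))
    simp only [Complex.real_smul]
    push_cast
    rw [e] at hw2
    linear_combination ((F y : ℂ) * (ω : ℂ) ^ 2) * hw2
  · simp [image_eq_zero_of_notMem_tsupport hy]

/-! ### Pointwise bounds for potentials -/

lemma ker_measurable_truncated {w : ℝ → ℂ} (hw : ContinuousOn w (Set.Ioi 0)) {ω δ : ℝ}
    (hω : ω ≠ 0) (hδ : 0 < δ) :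
    AEStronglyMeasurable ({z : E2 | δ < ‖z‖}.indicator (radialKer w ω)) := by
  have ho : IsOpen {z : E2 | δ < ‖z‖} := isOpen_lt continuous_const continuous_norm
  rw [aestronglyMeasurable_indicator_iff ho.measurableSet]
  refine ContinuousOn.aestronglyMeasurable ?_ ho.measurableSet
  refine hw.comp (by fun_prop) fun z hz => phase_pos hω (norm_pos_iff.1 (hδ.trans hz))

/-- Far from the support of the density the potential is differentiable, and derivatives fall on
the density. -/
lemma hasFDerivAt_potential {w : ℝ → ℂ} (hw : ContinuousOn w (Set.Ioi 0)) {M : ℝ}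
    (hM : ∀ t, 1 / 4 ≤ t → ‖w t‖ ≤ M) {ω δ : ℝ} (hδ : 0 < δ) (hωδ : 1 ≤ δ * |ω|)
    {Ω : Set E2} {x : E2} {F : E2 → ℝ} (hF : Admissible Ω δ x F) :
    ∃ D : E2 →L[ℝ] ℂ, HasFDerivAt (potential w ω F) D x ∧
      ∀ i, D (EuclideanSpace.single i 1) = potential w ω (pd i F) x := by
  have hω : ω ≠ 0 := by
    rintro rfl
    rw [abs_zero, mul_zero] at hωδ
    linarith
  -- The kernel is cut off near its singularity, which the density does not meet.
  set G : E2 → ℂ := {z : E2 | δ < ‖z‖}.indicator (radialKer w ω)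
  have hGin : ∀ z, δ < ‖z‖ → G z = radialKer w ω z := fun z hz =>
    Set.indicator_of_mem (show z ∈ {z : E2 | δ < ‖z‖} from hz) _
  have hGout : ∀ z, ¬ δ < ‖z‖ → G z = 0 := fun z hz =>
    Set.indicator_of_notMem (show z ∉ {z : E2 | δ < ‖z‖} from hz) _
  have hGM : ∀ z, ‖G z‖ ≤ |M| := by
    intro z
    by_cases hz : δ < ‖z‖
    · rw [hGin z hz]
      refine (hM _ ?_).trans (le_abs_self M)
      have h1 : 1 ≤ |ω| * ‖z‖ := by
        calc 1 ≤ δ * |ω| := hωδ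
          _ ≤ |ω| * ‖z‖ := by rw [mul_comm]; gcongr
      rw [← sq_abs (ω * ‖z‖), abs_mul, abs_norm]
      nlinarith
    · rw [hGout z hz]; simp
  have hGl : LocallyIntegrable G := by
    refine (locallyIntegrable_const (|M| : ℝ)).mono (ker_measurable_truncated hw hω hδ)
      (.of_forall fun z => ?_)
    rw [Real.norm_eq_abs, abs_abs]; exact hGM z
  set B : ℝ →L[ℝ] ℂ →L[ℝ] ℂ := ContinuousLinearMap.lsmul ℝ ℝ
  have hconv : ∀ {H : E2 → ℝ} {x' : E2}, (∀ y ∈ tsupport H, δ < ‖x' - y‖) →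
      potential w ω H x' = convolution H G B volume x' := by
    intro H x' hH
    rw [potential, convolution_def]
    refine integral_congr_ae (.of_forall fun y => ?_)
    by_cases hy : y ∈ tsupport H
    · change _ = H y • G (x' - y)
      rw [hGin _ (hH y hy)]
    · simp [image_eq_zero_of_notMem_tsupport hy]
  have hF1 : ContDiff ℝ 1 F := hF.smooth.of_le (by exact_mod_cast le_top)
  refine ⟨_, ((hF.compact.hasFDerivAt_convolution_left B hF1 hGl x).congr_of_eventuallyEq ?_),
    fun i => ?_⟩
  · filter_upwards [hF.eventually] with x' hx'
    exact hconv hx'.far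
  · have hex := (hF.compact.fderiv (𝕜 := ℝ)).convolutionExists_left (B.precompL E2)
      (hF1.continuous_fderiv one_ne_zero) hGl x
    rw [hconv (hF.pd i).far, convolution_def, convolution_def,
      ContinuousLinearMap.integral_apply hex]
    rfl

/-- Cauchy–Schwarz on a set of finite measure. -/
lemma sq_setIntegral_le {Ω : Set E2} (hΩ : volume Ω < ⊤) {u : E2 → ℝ}
    (i1 : IntegrableOn u Ω) (i2 : IntegrableOn (fun y => u y ^ 2) Ω) :
    (∫ y in Ω, u y) ^ 2 ≤ volume.real Ω * ∫ y in Ω, u y ^ 2 := by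
  have : IsFiniteMeasure (volume.restrict Ω) := ⟨by simpa using hΩ⟩
  obtain ⟨I, hI⟩ : ∃ I, I = ∫ y in Ω, u y := ⟨_, rfl⟩
  obtain ⟨S, hS⟩ : ∃ S, S = ∫ y in Ω, u y ^ 2 := ⟨_, rfl⟩
  obtain ⟨V, hV⟩ : ∃ V, V = volume.real Ω := ⟨_, rfl⟩
  have h0 : 0 ≤ ∫ y in Ω, (V * u y - I) ^ 2 := integral_nonneg fun _ => sq_nonneg _
  have h1 : ∫ y in Ω, (V * u y - I) ^ 2 = V ^ 2 * S - 2 * V * I * I + V * I ^ 2 := by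
    have e : ∀ y, (V * u y - I) ^ 2 = V ^ 2 * u y ^ 2 - 2 * V * I * u y + I ^ 2 := by
      intro y; ring
    simp_rw [e]
    have i3 : IntegrableOn (fun y => V ^ 2 * u y ^ 2 - 2 * V * I * u y) Ω :=
      (i2.const_mul _).sub (i1.const_mul _)
    rw [integral_add i3 (integrable_const _),
      integral_sub (i2.const_mul _) (i1.const_mul _), integral_const_mul, integral_const_mul,
      integral_const, measureReal_restrict_apply_univ, smul_eq_mul, ← hI, ← hS, ← hV]
  rw [← hI, ← hS, ← hV]
  have hV0 : 0 ≤ V := hV ▸ measureReal_nonneg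
  rcases hV0.eq_or_lt with hV1 | hV1
  · have h2 : volume Ω = 0 := by
      rw [hV, eq_comm, measureReal_def, ENNReal.toReal_eq_zero_iff] at hV1
      exact hV1.resolve_right hΩ.ne
    have hI0 : I = 0 := by rw [hI, Measure.restrict_eq_zero.2 h2, integral_zero_measure]
    rw [hI0, ← hV1]; simp
  · rw [h1] at h0
    have h3 : 0 ≤ V * (V * S - I ^ 2) := by linarith
    have := nonneg_of_mul_nonneg_right h3 hV1
    linarith

lemma sq_integral_abs_le {Ω : Set E2} (hb : Bornology.IsBounded Ω) {F : E2 → ℝ}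
    (hF : Continuous F) (hFc : HasCompactSupport F) (hs : tsupport F ⊆ Ω) :
    (∫ y, |F y|) ^ 2 ≤ volume.real Ω * ∫ y, F y ^ 2 := by
  have hz : ∀ y ∉ Ω, F y = 0 := fun y hy => image_eq_zero_of_notMem_tsupport fun h => hy (hs h)
  have e1 : ∫ y, |F y| = ∫ y in Ω, |F y| :=
    (setIntegral_eq_integral_of_forall_compl_eq_zero fun y hy => by rw [hz y hy, abs_zero]).symm
  have e2 : ∫ y, F y ^ 2 = ∫ y in Ω, |F y| ^ 2 := by
    simp_rw [sq_abs]
    exact (setIntegral_eq_integral_of_forall_compl_eq_zero fun y hy => by rw [hz y hy]; simp).symm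
  have c1 : HasCompactSupport fun y => |F y| := hFc.mono fun y hy h => hy (by simp [h])
  have c2 : HasCompactSupport fun y => |F y| ^ 2 := hFc.mono fun y hy h => hy (by simp [h])
  have i1 : Integrable fun y => |F y| := hF.abs.integrable_of_hasCompactSupport c1
  have i2 : Integrable fun y => |F y| ^ 2 := (hF.abs.pow 2).integrable_of_hasCompactSupport c2
  rw [e1, e2]
  exact sq_setIntegral_le hb.measure_lt_top i1.integrableOn i2.integrableOn

/-- The arguments of the kernel that matter are at least `1 / 4`, since `|ω| ‖x - y‖ ≥ |ω| δ ≥ 1`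
on the support of the density. -/
lemma norm_potential_le {w : ℝ → ℂ} {M : ℝ}
    (hM : ∀ t, 1 / 4 ≤ t → ‖w t‖ ≤ M) {ω δ : ℝ} (hωδ : 1 ≤ δ * |ω|)
    {Ω : Set E2} (hb : Bornology.IsBounded Ω) {x : E2} {F : E2 → ℝ} (hF : Admissible Ω δ x F)
    {N : ℝ} (hN : ∫ y, F y ^ 2 ≤ N) :
    ‖potential w ω F x‖ ≤ Real.sqrt (M ^ 2 * volume.real Ω * N) := by
  have i1 : Integrable (fun y => |F y|) := hF.smooth.continuous.abs.integrable_of_hasCompactSupport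
    (hF.compact.comp_left (g := abs) abs_zero)
  have h1 : ‖potential w ω F x‖ ≤ ∫ y, M * |F y| := by
    refine norm_integral_le_of_norm_le (i1.const_mul M) (.of_forall fun y => ?_)
    by_cases hy : y ∈ tsupport F
    · rw [norm_smul, Real.norm_eq_abs, mul_comm]
      refine mul_le_mul_of_nonneg_right (hM _ ?_) (abs_nonneg _)
      have h1 : 1 ≤ |ω| * ‖x - y‖ := by
        calc 1 ≤ δ * |ω| := hωδ
          _ ≤ |ω| * ‖x - y‖ := by rw [mul_comm]; have := (hF.far y hy).le; gcongr
      rw [← sq_abs (ω * ‖x - y‖), abs_mul, abs_norm]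
      nlinarith
    · simp [image_eq_zero_of_notMem_tsupport hy]
  rw [integral_const_mul] at h1
  refine h1.trans (Real.le_sqrt_of_sq_le ?_)
  rw [mul_pow, mul_assoc]
  refine mul_le_mul_of_nonneg_left
    ((sq_integral_abs_le hb hF.smooth.continuous hF.compact hF.subset).trans ?_) (sq_nonneg M)
  exact mul_le_mul_of_nonneg_left hN measureReal_nonneg

lemma sobNormSq_nonneg (m : ℕ) (f : E2 → ℝ) : 0 ≤ sobNormSq m f :=
  Finset.sum_nonneg fun _ _ => integral_nonneg fun _ => sq_nonneg _

lemma integral_sq_le_sobNormSq {m a b : ℕ} (hab : a + b ≤ m) (f : E2 → ℝ) :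
    ∫ x, ((pd 0)^[a] ((pd 1)^[b] f) x) ^ 2 ≤ sobNormSq m f := by
  refine Finset.single_le_sum
    (f := fun α : ℕ × ℕ => ∫ x : E2, ((pd 0)^[α.1] ((pd 1)^[α.2] f) x) ^ 2)
    (fun _ _ => integral_nonneg fun _ => sq_nonneg _) (a := (a, b)) ?_
  simp only [Finset.mem_filter, Finset.mem_product, Finset.mem_range]
  omega


/-! ### Decay of potentials in the frequency -/

/-- Two orders of decay in `ω`, paid for with two derivatives of the density. -/
lemma decay_two {w w₁ : ℝ → ℂ} (h : BesselPair w w₁) {M : ℝ}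
    (hM : ∀ t, 1 / 4 ≤ t → ‖w t‖ ≤ M) {ω δ : ℝ} (hδ : 0 < δ) (hωδ : 1 ≤ δ * |ω|)
    {Ω : Set E2} (hb : Bornology.IsBounded Ω) {x : E2} {F : E2 → ℝ} (hF : Admissible Ω δ x F)
    {N : ℝ} (hN : ∀ i, ∫ y, pd i (pd i F) y ^ 2 ≤ N) :
    |ω| ^ 2 * ‖potential w ω F x‖ ≤ 2 * Real.sqrt (M ^ 2 * volume.real Ω * N) := by
  have hω : ω ≠ 0 := by
    rintro rfl
    rw [abs_zero, mul_zero] at hωδ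
    linarith
  have e := congrArg norm (potential_helmholtz h hω hδ hF)
  rw [norm_mul, norm_neg, norm_pow, Complex.norm_real, Real.norm_eq_abs] at e
  rw [← e]
  refine (norm_add_le _ _).trans ?_
  linarith [norm_potential_le hM hωδ hb ((hF.pd 0).pd 0) (hN 0),
    norm_potential_le hM hωδ hb ((hF.pd 1).pd 1) (hN 1)]

/-- Four orders of decay in `ω`, paid for with four derivatives of the density. -/
lemma decay_four {w w₁ : ℝ → ℂ} (h : BesselPair w w₁) {M : ℝ}
    (hM : ∀ t, 1 / 4 ≤ t → ‖w t‖ ≤ M) {ω δ : ℝ} (hδ : 0 < δ) (hωδ : 1 ≤ δ * |ω|)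
    {Ω : Set E2} (hb : Bornology.IsBounded Ω) {x : E2} {F : E2 → ℝ} (hF : Admissible Ω δ x F)
    {N : ℝ} (hN : ∀ i j, ∫ y, pd i (pd i (pd j (pd j F))) y ^ 2 ≤ N) :
    |ω| ^ 4 * ‖potential w ω F x‖ ≤ 4 * Real.sqrt (M ^ 2 * volume.real Ω * N) := by
  have hω : ω ≠ 0 := by
    rintro rfl
    rw [abs_zero, mul_zero] at hωδ
    linarith
  have e := congrArg norm (potential_helmholtz h hω hδ hF)
  rw [norm_mul, norm_neg, norm_pow, Complex.norm_real, Real.norm_eq_abs] at e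
  have h0 := decay_two h hM hδ hωδ hb ((hF.pd 0).pd 0) fun i => hN i 0
  have h1 := decay_two h hM hδ hωδ hb ((hF.pd 1).pd 1) fun i => hN i 1
  calc |ω| ^ 4 * ‖potential w ω F x‖ = |ω| ^ 2 * (|ω| ^ 2 * ‖potential w ω F x‖) := by ring
    _ = |ω| ^ 2 * ‖potential w ω (pd 0 (pd 0 F)) x + potential w ω (pd 1 (pd 1 F)) x‖ := by rw [e]
    _ ≤ |ω| ^ 2 * (‖potential w ω (pd 0 (pd 0 F)) x‖ + ‖potential w ω (pd 1 (pd 1 F)) x‖) := by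
      gcongr; exact norm_add_le _ _
    _ ≤ _ := by linarith

lemma integral_pd2_sq_le {m : ℕ} (hm : 2 ≤ m) (f : E2 → ℝ) (i : Fin 2) :
    ∫ y, pd i (pd i f) y ^ 2 ≤ sobNormSq m f := by
  fin_cases i
  · exact integral_sq_le_sobNormSq (a := 2) (b := 0) (by omega) f
  · exact integral_sq_le_sobNormSq (a := 0) (b := 2) (by omega) f

lemma integral_pd3_sq_le {m : ℕ} (hm : 3 ≤ m) {f : E2 → ℝ} (hf : ContDiff ℝ (⊤ : ℕ∞) f)
    (i j : Fin 2) : ∫ y, pd i (pd i (pd j f)) y ^ 2 ≤ sobNormSq m f := by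
  have e : pd 1 (pd 1 (pd 0 f)) = pd 0 (pd 1 (pd 1 f)) := by
    rw [pd_comm hf 1 0, pd_comm (contDiff_pd hf 1) 1 0]
  fin_cases i <;> fin_cases j
  · exact integral_sq_le_sobNormSq (a := 3) (b := 0) (by omega) f
  · exact integral_sq_le_sobNormSq (a := 2) (b := 1) (by omega) f
  · change ∫ y, pd 1 (pd 1 (pd 0 f)) y ^ 2 ≤ _
    rw [e]
    exact integral_sq_le_sobNormSq (a := 1) (b := 2) (by omega) f
  · exact integral_sq_le_sobNormSq (a := 0) (b := 3) (by omega) f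

lemma integral_pd4_sq_le {m : ℕ} (hm : 4 ≤ m) {f : E2 → ℝ} (hf : ContDiff ℝ (⊤ : ℕ∞) f)
    (i j : Fin 2) : ∫ y, pd i (pd i (pd j (pd j f))) y ^ 2 ≤ sobNormSq m f := by
  have e : pd 1 (pd 1 (pd 0 (pd 0 f))) = pd 0 (pd 0 (pd 1 (pd 1 f))) := by
    rw [pd_comm (contDiff_pd hf 0) 1 0, pd_comm (contDiff_pd (contDiff_pd hf 0) 1) 1 0,
      pd_comm hf 1 0, pd_comm (contDiff_pd hf 1) 1 0]
  fin_cases i <;> fin_cases j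
  · exact integral_sq_le_sobNormSq (a := 4) (b := 0) (by omega) f
  · exact integral_sq_le_sobNormSq (a := 2) (b := 2) (by omega) f
  · change ∫ y, pd 1 (pd 1 (pd 0 (pd 0 f))) y ^ 2 ≤ _
    rw [e]
    exact integral_sq_le_sobNormSq (a := 2) (b := 2) (by omega) f
  · exact integral_sq_le_sobNormSq (a := 0) (b := 4) (by omega) f

/-! ### The scattering solution as a combination of potentials -/

lemma scatSol_eq {Ω : Set E2} {δ : ℝ} (hδ : 0 < δ) {x : E2} {f₀ f₁ : E2 → ℝ}
    (h₀ : Admissible Ω δ x f₀) (h₁ : Admissible Ω δ x f₁) {ω : ℝ} (hω : ω ≠ 0) :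
    scatSol Ω f₀ f₁ x ω = (-Complex.I / 4) *
      (potential (wfun (if 0 < ω then 1 else -1)) ω f₁ x +
        Complex.I * ω * potential (wfun (if 0 < ω then 1 else -1)) ω f₀ x) := by
  set σ : ℝ := if 0 < ω then 1 else -1 with hσ
  have hw : ContinuousOn (wfun σ) (Set.Ioi 0) :=
    fun t ht => (besselPair_wfun σ t ht).1.continuousAt.continuousWithinAt
  have hK := continuousOn_comp_phase hω x hw
  have i1 := integrable_smul_of_continuousOn h₁.smooth.continuous h₁.compact (h₁.notMem hδ) hK
  have i0 := integrable_smul_of_continuousOn h₀.smooth.continuous h₀.compact (h₀.notMem hδ) hK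
  have hker : ∀ y ∈ tsupport f₀ ∪ tsupport f₁,
      hankelH0 ((ω : ℂ) * ((‖x - y‖ : ℝ) : ℂ)) = wfun σ ((ω * ‖x - y‖) ^ 2 / 4) := by
    intro y hy
    have hr : 0 < ‖x - y‖ := by
      rcases hy with hy | hy
      · exact hδ.trans (h₀.far y hy)
      · exact hδ.trans (h₁.far y hy)
    rw [← Complex.ofReal_mul, hankelH0_real _ (mul_ne_zero hω hr.ne')]
    simp only [mul_pos_iff_of_pos_right hr, hσ]
  rw [scatSol, potential, potential, setIntegral_eq_integral_of_forall_compl_eq_zero,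
    ← integral_const_mul (Complex.I * (ω : ℂ))]
  · congr 1
    have i0' : Integrable fun y => Complex.I * ω * (f₀ y • radialKer (wfun σ) ω (x - y)) :=
      i0.const_mul _
    refine Eq.trans ?_ (integral_add i1 i0')
    refine integral_congr_ae (.of_forall fun y => ?_)
    by_cases hy : y ∈ tsupport f₀ ∪ tsupport f₁
    · simp only [radialKer, Complex.real_smul]
      rw [hker y hy]
      ring
    · have z0 := image_eq_zero_of_notMem_tsupport fun h => hy (Or.inl h)
      have z1 := image_eq_zero_of_notMem_tsupport fun h => hy (Or.inr h)
      simp [z0, z1]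
  · intro y hy
    have z0 := image_eq_zero_of_notMem_tsupport fun h => hy (h₀.subset h)
    have z1 := image_eq_zero_of_notMem_tsupport fun h => hy (h₁.subset h)
    simp [z0, z1]

/-- In the gradient of the scattering solution the derivative falls on the densities. -/
lemma fderiv_scatSol {Ω : Set E2} {δ : ℝ} (hδ : 0 < δ) {x : E2} {f₀ f₁ : E2 → ℝ}
    (h₀ : Admissible Ω δ x f₀) (h₁ : Admissible Ω δ x f₁) {ω : ℝ} (hωδ : 1 ≤ δ * |ω|)
    (i : Fin 2) :
    fderiv ℝ (fun x' => scatSol Ω f₀ f₁ x' ω) x (EuclideanSpace.single i 1) = (-Complex.I / 4) *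
      (potential (wfun (if 0 < ω then 1 else -1)) ω (pd i f₁) x +
        Complex.I * ω * potential (wfun (if 0 < ω then 1 else -1)) ω (pd i f₀) x) := by
  have hω : ω ≠ 0 := by
    rintro rfl
    rw [abs_zero, mul_zero] at hωδ
    linarith
  set σ : ℝ := if 0 < ω then 1 else -1
  have hw : ContinuousOn (wfun σ) (Set.Ioi 0) :=
    fun t ht => (besselPair_wfun σ t ht).1.continuousAt.continuousWithinAt
  obtain ⟨M, -, hM⟩ := (besselPair_wfun σ).bounded
  obtain ⟨D₀, hD₀, e₀⟩ := hasFDerivAt_potential hw hM hδ hωδ h₀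
  obtain ⟨D₁, hD₁, e₁⟩ := hasFDerivAt_potential hw hM hδ hωδ h₁
  have ev : (fun x' => scatSol Ω f₀ f₁ x' ω) =ᶠ[nhds x] fun x' => (-Complex.I / 4) *
      (potential (wfun σ) ω f₁ x' + Complex.I * ω * potential (wfun σ) ω f₀ x') := by
    filter_upwards [h₀.eventually, h₁.eventually] with x' h₀' h₁'
    exact scatSol_eq hδ h₀' h₁' hω
  have hD : HasFDerivAt (fun x' => (-Complex.I / 4) *
      (potential (wfun σ) ω f₁ x' + Complex.I * ω * potential (wfun σ) ω f₀ x'))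
      ((-Complex.I / 4) • (D₁ + (Complex.I * (ω : ℂ)) • D₀)) x :=
    (hD₁.add (hD₀.const_mul (Complex.I * ω))).const_mul (-Complex.I / 4)
  rw [ev.fderiv_eq, hD.fderiv]
  simp [e₀, e₁, mul_add]

/-! ### Pointwise decay of the scattering solution and its gradient -/

lemma norm_quarter_le (a b : ℂ) (ω : ℝ) :
    ‖(-Complex.I / 4) * (a + Complex.I * ω * b)‖ ≤ (‖a‖ + |ω| * ‖b‖) / 4 := by
  have h := norm_add_le a (Complex.I * ω * b)
  rw [norm_mul (Complex.I * ω) b, norm_mul Complex.I, Complex.norm_I, one_mul, Complex.norm_real,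
    Real.norm_eq_abs] at h
  rw [norm_mul, norm_div, norm_neg, Complex.norm_I, Complex.norm_ofNat]
  linarith

/-- A bound for the kernel that serves both signs of the frequency. -/
lemma exists_bound_wfun : ∃ M : ℝ, 0 ≤ M ∧ ∀ ω : ℝ, ∀ t, 1 / 4 ≤ t →
    ‖wfun (if 0 < ω then 1 else -1) t‖ ≤ M := by
  obtain ⟨M, hM0, hM⟩ := (besselPair_wfun 1).bounded
  obtain ⟨M', -, hM'⟩ := (besselPair_wfun (-1)).bounded
  refine ⟨max M M', hM0.trans (le_max_left _ _), fun ω t ht => ?_⟩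
  split_ifs
  · exact (hM t ht).trans (le_max_left _ _)
  · exact (hM' t ht).trans (le_max_right _ _)

/-- Both integrands of the tail are `O(ω⁻²)`, uniformly on the boundary. -/
lemma exists_pointwise_bound {Ω : Set E2} (hb : Bornology.IsBounded Ω) {δ : ℝ} (hδ : 0 < δ) :
    ∃ A : ℝ, 0 ≤ A ∧ ∀ {f₀ f₁ : E2 → ℝ} {x : E2}, Admissible Ω δ x f₀ → Admissible Ω δ x f₁ →
      ∀ {ω : ℝ}, 1 ≤ δ * |ω| →
        ω ^ 2 * ‖scatSol Ω f₀ f₁ x ω‖ ^ 2 ≤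
          A * (sobNormSq 4 f₀ + sobNormSq 3 f₁) * (ω ^ 2)⁻¹ ∧
        gradNormSq (fun x' => scatSol Ω f₀ f₁ x' ω) x ≤
          A * (sobNormSq 4 f₀ + sobNormSq 3 f₁) * (ω ^ 2)⁻¹ := by
  obtain ⟨M, hM0, hM⟩ := exists_bound_wfun
  refine ⟨(1 + 2 * δ ^ 2) * (M ^ 2 * volume.real Ω), by positivity, ?_⟩
  intro f₀ f₁ x h₀ h₁ ω hωδ
  have hω : ω ≠ 0 := by
    rintro rfl
    rw [abs_zero, mul_zero] at hωδ
    linarith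
  have ha : 0 < |ω| := abs_pos.2 hω
  have n0 := sobNormSq_nonneg 4 f₀
  have n1 := sobNormSq_nonneg 3 f₁
  have hW := besselPair_wfun (if 0 < ω then 1 else -1)
  set W := wfun (if 0 < ω then 1 else -1)
  set B := M ^ 2 * volume.real Ω
  have hB : 0 ≤ B := by positivity
  set N₀ := sobNormSq 4 f₀
  set N₁ := sobNormSq 3 f₁
  set β₀ := Real.sqrt (B * N₀)
  set β₁ := Real.sqrt (B * N₁)
  have q0 : β₀ ^ 2 = B * N₀ := Real.sq_sqrt (by positivity)
  have q1 : β₁ ^ 2 = B * N₁ := Real.sq_sqrt (by positivity)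
  have p0 : 0 ≤ β₀ := Real.sqrt_nonneg _
  have p1 : 0 ≤ β₁ := Real.sqrt_nonneg _
  have conv : ∀ {v : ℂ} {c : ℝ}, |ω| * ‖v‖ ≤ c → ω ^ 2 * ‖v‖ ^ 2 ≤ c ^ 2 := by
    intro v c hv
    rw [← sq_abs ω, ← mul_pow]
    exact pow_le_pow_left₀ (by positivity) hv 2
  constructor
  · have d1 : |ω| ^ 2 * ‖potential W ω f₁ x‖ ≤ 2 * β₁ :=
      decay_two hW (hM ω) hδ hωδ hb h₁ (integral_pd2_sq_le (by norm_num) f₁)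
    have d0 : |ω| ^ 4 * ‖potential W ω f₀ x‖ ≤ 4 * β₀ :=
      decay_four hW (hM ω) hδ hωδ hb h₀ (integral_pd4_sq_le le_rfl h₀.smooth)
    have hu : |ω| ^ 2 * ‖scatSol Ω f₀ f₁ x ω‖ ≤ β₁ / 2 + δ * β₀ := by
      rw [scatSol_eq hδ h₀ h₁ hω]
      have h := norm_quarter_le (potential W ω f₁ x) (potential W ω f₀ x) ω
      have d0' : |ω| ^ 3 * ‖potential W ω f₀ x‖ ≤ 4 * (δ * β₀) := by
        calc |ω| ^ 3 * ‖potential W ω f₀ x‖ ≤ (δ * |ω|) * (|ω| ^ 3 * ‖potential W ω f₀ x‖) :=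
              le_mul_of_one_le_left (by positivity) hωδ
          _ = δ * (|ω| ^ 4 * ‖potential W ω f₀ x‖) := by ring
          _ ≤ δ * (4 * β₀) := by gcongr
          _ = 4 * (δ * β₀) := by ring
      refine (mul_le_mul_of_nonneg_left h (sq_nonneg |ω|)).trans ?_
      linear_combination d1 / 4 + d0' / 4
    have hu2 : ω ^ 2 * (ω ^ 2 * ‖scatSol Ω f₀ f₁ x ω‖ ^ 2) ≤ (β₁ / 2 + δ * β₀) ^ 2 := by
      have := pow_le_pow_left₀ (by positivity) hu 2
      rw [mul_pow, sq_abs] at this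
      linarith
    rw [← div_eq_mul_inv, le_div_iff₀' (by positivity)]
    refine hu2.trans ?_
    have : (β₁ / 2 + δ * β₀) ^ 2 ≤ β₁ ^ 2 / 2 + 2 * δ ^ 2 * β₀ ^ 2 := by
      nlinarith [sq_nonneg (β₁ / 2 - δ * β₀)]
    rw [q0, q1] at this
    have e1 : 0 ≤ B * N₀ := by positivity
    have e2 : 0 ≤ B * N₁ := by positivity
    have e3 : 0 ≤ δ ^ 2 * (B * N₁) := by positivity
    linarith
  · have hg : ∀ i, ω ^ 2 * ‖fderiv ℝ (fun x' => scatSol Ω f₀ f₁ x' ω) x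
        (EuclideanSpace.single i 1)‖ ^ 2 ≤ ((δ * β₁ + β₀) / 2) ^ 2 := by
      intro i
      refine conv ?_
      rw [fderiv_scatSol hδ h₀ h₁ hωδ]
      have h := norm_quarter_le (potential W ω (pd i f₁) x) (potential W ω (pd i f₀) x) ω
      have d1 : |ω| ^ 2 * ‖potential W ω (pd i f₁) x‖ ≤ 2 * β₁ :=
        decay_two hW (hM ω) hδ hωδ hb (h₁.pd i)
          fun j => integral_pd3_sq_le le_rfl h₁.smooth j i
      have d0 : |ω| ^ 2 * ‖potential W ω (pd i f₀) x‖ ≤ 2 * β₀ :=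
        decay_two hW (hM ω) hδ hωδ hb (h₀.pd i)
          fun j => integral_pd3_sq_le (by norm_num) h₀.smooth j i
      have d1' : |ω| * ‖potential W ω (pd i f₁) x‖ ≤ 2 * (δ * β₁) := by
        calc |ω| * ‖potential W ω (pd i f₁) x‖ ≤ (δ * |ω|) * (|ω| * ‖potential W ω (pd i f₁) x‖) :=
              le_mul_of_one_le_left (by positivity) hωδ
          _ = δ * (|ω| ^ 2 * ‖potential W ω (pd i f₁) x‖) := by ring
          _ ≤ δ * (2 * β₁) := by gcongr
          _ = 2 * (δ * β₁) := by ring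
      refine (mul_le_mul_of_nonneg_left h ha.le).trans ?_
      linear_combination d1' / 4 + d0 / 4
    rw [← div_eq_mul_inv, le_div_iff₀' (by positivity), gradNormSq, Fin.sum_univ_two, mul_add]
    refine (add_le_add (hg 0) (hg 1)).trans ?_
    have : ((δ * β₁ + β₀) / 2) ^ 2 ≤ (δ ^ 2 * β₁ ^ 2 + β₀ ^ 2) / 2 := by
      nlinarith [sq_nonneg (δ * β₁ - β₀)]
    rw [q0, q1] at this
    have e1 : 0 ≤ δ ^ 2 * (B * N₀) := by positivity
    have e2 : 0 ≤ B * N₁ := by positivity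
    have e3 : 0 ≤ δ ^ 2 * (B * N₁) := by positivity
    linarith

/-! ### The frequency integral -/

lemma tail_inv_sq {k : ℝ} (hk : 0 < k) :
    IntegrableOn (fun ω : ℝ => (ω ^ 2)⁻¹) {ω : ℝ | k < |ω|} ∧
      ∫ ω in {ω : ℝ | k < |ω|}, (ω ^ 2)⁻¹ = 2 * k⁻¹ := by
  have hpow : ∀ ω ∈ Set.Ioi k, ω ^ (-2 : ℝ) = (ω ^ 2)⁻¹ := fun ω hω => by
    rw [Real.rpow_neg (hk.trans hω).le, Real.rpow_two]
  have i1 : IntegrableOn (fun ω : ℝ => (ω ^ 2)⁻¹) (Set.Ioi k) :=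
    (integrableOn_Ioi_rpow_of_lt (by norm_num) hk).congr_fun hpow measurableSet_Ioi
  have v1 : ∫ ω in Set.Ioi k, (ω ^ 2)⁻¹ = k⁻¹ := by
    rw [← setIntegral_congr_fun measurableSet_Ioi hpow,
      integral_Ioi_rpow_of_lt (by norm_num) hk]
    norm_num [Real.rpow_neg_one]
  have i2 : IntegrableOn (fun ω : ℝ => (ω ^ 2)⁻¹) (Set.Iio (-k)) := by
    have := i1.comp_neg
    simpa using this
  have v2 : ∫ ω in Set.Iio (-k), (ω ^ 2)⁻¹ = k⁻¹ := by
    rw [← integral_Iic_eq_integral_Iio, ← v1]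
    have := integral_comp_neg_Ioi k (fun ω : ℝ => (ω ^ 2)⁻¹)
    simpa using this.symm
  have hs : {ω : ℝ | k < |ω|} = Set.Iio (-k) ∪ Set.Ioi k := by
    ext ω
    simp only [Set.mem_ofPred_eq, lt_abs, Set.mem_union, Set.mem_Iio, Set.mem_Ioi]
    constructor
    · rintro (h | h)
      · exact Or.inr h
      · exact Or.inl (by linarith)
    · rintro (h | h)
      · exact Or.inr (by linarith)
      · exact Or.inl h
  rw [hs]
  refine ⟨i2.union i1, ?_⟩
  rw [setIntegral_union _ measurableSet_Ioi i2 i1, v1, v2]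
  · ring
  · exact Set.disjoint_left.2 fun a (h1 : a < -k) (h2 : k < a) => by linarith

/-- Upper bounds for integrals over the frequency tail; no integrability of `g` is needed, because
the integral of a non-integrable function is `0`. -/
lemma tail_integral_le {k c : ℝ} (hk : 0 < k) {g : ℝ → ℝ}
    (h0 : ∀ ω, k < |ω| → 0 ≤ g ω) (h1 : ∀ ω, k < |ω| → g ω ≤ c * (ω ^ 2)⁻¹) :
    ∫ ω in {ω : ℝ | k < |ω|}, g ω ≤ c * (2 * k⁻¹) := by
  have hm : MeasurableSet {ω : ℝ | k < |ω|} :=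
    (isOpen_lt continuous_const continuous_abs).measurableSet
  rw [← (tail_inv_sq hk).2, ← integral_const_mul]
  refine integral_mono_of_nonneg ?_ ((tail_inv_sq hk).1.const_mul c) ?_
  · exact (ae_restrict_iff' hm).2 (.of_forall h0)
  · exact (ae_restrict_iff' hm).2 (.of_forall h1)

lemma boundary_integral_le {Ω : Set E2} (hΩ : μH[1] (frontier Ω) < ⊤) {g : E2 → ℝ} {c : ℝ}
    (h0 : ∀ x ∈ frontier Ω, 0 ≤ g x) (h1 : ∀ x ∈ frontier Ω, g x ≤ c) :
    ∫ x in frontier Ω, g x ∂(μH[1]) ≤ c * (μH[1] : Measure E2).real (frontier Ω) :=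
  (le_abs_self _).trans (norm_setIntegral_le_of_norm_le_const hΩ fun x hx => by
    rw [Real.norm_eq_abs, abs_of_nonneg (h0 x hx)]; exact h1 x hx)

end

/-- **Tail estimate for high frequencies** (Lemma 4.1):
`∫_{|ω|>k} ω²‖u(·,ω)‖²_{L²(∂Ω)} dω + ∫_{|ω|>k} ‖∇ₓu(·,ω)‖²_{L²(∂Ω)} dω
  ≤ C k⁻¹ (‖f₀‖²_{(4)} + ‖f₁‖²_{(3)})`. -/
theorem high_frequency_tail_bound
    (Ω : Set E2) (hΩo : IsOpen Ω) (hΩb : Bornology.IsBounded Ω) (hΩ2 : HasC2Boundary Ω)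
    (δ : ℝ) (hδ : 0 < δ) :
    ∃ C : ℝ, 0 < C ∧
      ∀ f₀ f₁ : E2 → ℝ,
        ContDiff ℝ (⊤ : ℕ∞) f₀ → ContDiff ℝ (⊤ : ℕ∞) f₁ →
        HasCompactSupport f₀ → HasCompactSupport f₁ →
        tsupport f₀ ⊆ Ω → tsupport f₁ ⊆ Ω →
        (∀ x ∈ frontier Ω, ∀ y ∈ tsupport f₀ ∪ tsupport f₁, δ < ‖x - y‖) →
        ∀ k : ℝ, 1 ≤ δ * k →
          (∫ ω in {ω : ℝ | k < |ω|},
              ω ^ 2 * ∫ x in frontier Ω, ‖scatSol Ω f₀ f₁ x (ω : ℂ)‖ ^ 2 ∂(μH[1])) +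
            (∫ ω in {ω : ℝ | k < |ω|},
              ∫ x in frontier Ω, gradNormSq (fun x' => scatSol Ω f₀ f₁ x' (ω : ℂ)) x ∂(μH[1])) ≤
          C * k⁻¹ * (sobNormSq 4 f₀ + sobNormSq 3 f₁) := by
  obtain ⟨A, hA0, hA⟩ := exists_pointwise_bound hΩb hδ
  have hH := hausdorff_frontier_lt_top hΩb hΩ2
  set L := (μH[1] : Measure E2).real (frontier Ω)
  have hL : 0 ≤ L := measureReal_nonneg
  refine ⟨4 * A * L + 1, by positivity, ?_⟩
  intro f₀ f₁ s₀ s₁ c₀ c₁ t₀ t₁ hfar k hk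
  have hk0 : 0 < k := pos_of_mul_pos_right (one_pos.trans_le hk) hδ.le
  have a₀ : ∀ x ∈ frontier Ω, Admissible Ω δ x f₀ := fun x hx =>
    ⟨s₀, c₀, t₀, fun y hy => hfar x hx y (Or.inl hy)⟩
  have a₁ : ∀ x ∈ frontier Ω, Admissible Ω δ x f₁ := fun x hx =>
    ⟨s₁, c₁, t₁, fun y hy => hfar x hx y (Or.inr hy)⟩
  set N := sobNormSq 4 f₀ + sobNormSq 3 f₁
  have hN : 0 ≤ N := add_nonneg (sobNormSq_nonneg _ _) (sobNormSq_nonneg _ _)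
  have hω : ∀ ω : ℝ, k < |ω| → 1 ≤ δ * |ω| := fun ω h =>
    hk.trans (mul_le_mul_of_nonneg_left h.le hδ.le)
  have b1 : (∫ ω in {ω : ℝ | k < |ω|},
      ω ^ 2 * ∫ x in frontier Ω, ‖scatSol Ω f₀ f₁ x (ω : ℂ)‖ ^ 2 ∂(μH[1])) ≤
      A * N * L * (2 * k⁻¹) := by
    refine tail_integral_le hk0
      (fun ω _ => mul_nonneg (sq_nonneg _) (integral_nonneg fun _ => sq_nonneg _)) fun ω h => ?_
    rw [← integral_const_mul]
    refine (boundary_integral_le hH (fun x _ => by positivity)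
      fun x hx => (hA (a₀ x hx) (a₁ x hx) (hω ω h)).1).trans (le_of_eq ?_)
    ring
  have b2 : (∫ ω in {ω : ℝ | k < |ω|},
      ∫ x in frontier Ω, gradNormSq (fun x' => scatSol Ω f₀ f₁ x' (ω : ℂ)) x ∂(μH[1])) ≤
      A * N * L * (2 * k⁻¹) := by
    have hg : ∀ (g : E2 → ℂ) x, 0 ≤ gradNormSq g x := fun g x =>
      Finset.sum_nonneg fun _ _ => sq_nonneg _
    refine tail_integral_le hk0 (fun ω _ => integral_nonneg fun x => hg _ x) fun ω h => ?_
    refine (boundary_integral_le hH (fun x _ => hg _ x)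
      fun x hx => (hA (a₀ x hx) (a₁ x hx) (hω ω h)).2).trans (le_of_eq ?_)
    ring
  have hkN : 0 ≤ k⁻¹ * N := by positivity
  linarith
end

section
/- Let k = k₁ + ik₂ ∈ ℂ with k₁ > 0 and k₂ > 0, and let v : ℝ² → ℂ be twice continuously differentiable with Δv + k²v = 0 on all of ℝ². If ∫_{R < |x| < R+1} ( |v(x)|² + |∇v(x)|² ) dx → 0 as R → ∞, then v = 0 identically on ℝ². -/
/-!
The proof tests the equation against `χ v̄`, with `χ` a cutoff equal to `1` on `{|x| ≤ R}` and
supported in `{|x| ≤ R + 1}`, and takes imaginary parts, so that the term `χ |∇v|²` disappears.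
Equivalently, the current `G = Im (v̄ ∇v)` is a `C¹` real vector field with
`div G = Im (v̄ Δv) = -Im (k²) |v|²` and `Im (k²) = 2 k₁ k₂ > 0`; integrating by parts,
`2 k₁ k₂ ∫ χ |v|² = ∫ ∇χ · G ≤ C ∫_{R < |x| < R+1} (|v|² + |∇v|²)`,
where `C` does not depend on `R` since the annuli have fixed width. Letting `R → ∞` gives
`∫ χ₀ |v|² = 0` for each fixed cutoff `χ₀`, and `v` vanishes by continuity.
-/

open MeasureTheory Real Complex Filter

/-- The derivative of the smooth transition function is bounded: it is continuous, and it vanishes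
outside `[0, 1]`, where the function is extremal. -/
lemma exists_abs_deriv_smoothTransition_le :
    ∃ M : ℝ, ∀ t : ℝ, |deriv Real.smoothTransition t| ≤ M := by
  have hc : Continuous (deriv Real.smoothTransition) :=
    (Real.smoothTransition.contDiff (n := 1)).continuous_deriv le_rfl
  obtain ⟨M, hM⟩ := (isCompact_Icc (a := (0 : ℝ)) (b := 1)).exists_bound_of_continuousOn
    hc.continuousOn
  refine ⟨M, fun t => ?_⟩
  by_cases ht : t ∈ Set.Icc (0 : ℝ) 1
  · exact hM t ht
  · have hM0 : 0 ≤ M := (norm_nonneg _).trans (hM 0 (by simp))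
    have h0 : deriv Real.smoothTransition t = 0 := by
      by_cases h : t ≤ 0
      · refine IsLocalMin.deriv_eq_zero (Eventually.of_forall fun y => ?_)
        rw [Real.smoothTransition.zero_of_nonpos h]
        exact Real.smoothTransition.nonneg y
      · have h1 : 1 ≤ t := by
          by_contra h1
          exact ht ⟨by linarith, by linarith⟩
        refine IsLocalMax.deriv_eq_zero (Eventually.of_forall fun y => ?_)
        rw [Real.smoothTransition.one_of_one_le h1]
        exact Real.smoothTransition.le_one y
    simpa [h0] using hM0

/-- Cutoffs between `{‖x‖ ≤ R}` and `{‖x‖ < R + 1}` whose partial derivatives are supported in the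
annulus and bounded independently of `R`. -/
lemma exists_cutoff : ∃ M : ℝ, ∀ R : ℝ, 0 ≤ R → ∃ χ : E2 → ℝ, ContDiff ℝ 1 χ ∧
    (∀ x, 0 ≤ χ x) ∧ (∀ x, χ x ≤ 1) ∧ (∀ x, ‖x‖ ≤ R → χ x = 1) ∧
    (∀ x, R + 1 ≤ ‖x‖ → χ x = 0) ∧
    (∀ x (i : Fin 2), |fderiv ℝ χ x (EuclideanSpace.single i 1)| ≤ M) ∧
    (∀ x, ¬ (R < ‖x‖ ∧ ‖x‖ < R + 1) → fderiv ℝ χ x = 0) := by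
  obtain ⟨M, hM⟩ := exists_abs_deriv_smoothTransition_le
  have hM0 : 0 ≤ M := (abs_nonneg _).trans (hM 0)
  refine ⟨M * 2, fun R hR => ?_⟩
  -- Composing with `‖x‖²` rather than `‖x‖` avoids the singularity of the norm at the origin.
  set q : E2 → ℝ := fun x => ((R + 1) ^ 2 - ‖x‖ ^ 2) / (2 * R + 1) with hq
  have hR1 : 0 < 2 * R + 1 := by linarith
  have hqd : ContDiff ℝ 1 q := (contDiff_const.sub (contDiff_norm_sq ℝ)).div_const _
  set χ : E2 → ℝ := fun x => Real.smoothTransition (q x) with hχ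
  have hχd : ContDiff ℝ 1 χ := Real.smoothTransition.contDiff.comp hqd
  have h0 : ∀ x, 0 ≤ χ x := fun x => Real.smoothTransition.nonneg _
  have h1 : ∀ x, χ x ≤ 1 := fun x => Real.smoothTransition.le_one _
  have hin : ∀ x, ‖x‖ ≤ R → χ x = 1 := by
    intro x hx
    apply Real.smoothTransition.one_of_one_le
    rw [hq, le_div_iff₀ hR1]
    nlinarith [norm_nonneg x]
  have hout : ∀ x, R + 1 ≤ ‖x‖ → χ x = 0 := by
    intro x hx
    apply Real.smoothTransition.zero_of_nonpos
    apply div_nonpos_of_nonpos_of_nonneg _ hR1.le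
    nlinarith [norm_nonneg x]
  -- Outside the annulus `χ` attains its maximum `1` or its minimum `0`.
  have hz : ∀ x, ¬ (R < ‖x‖ ∧ ‖x‖ < R + 1) → fderiv ℝ χ x = 0 := by
    intro x hx
    by_cases h : ‖x‖ ≤ R
    · refine IsLocalMax.fderiv_eq_zero (Eventually.of_forall fun y => ?_)
      rw [hin x h]
      exact h1 y
    · refine IsLocalMin.fderiv_eq_zero (Eventually.of_forall fun y => ?_)
      rw [hout x (not_lt.1 fun h' => hx ⟨not_le.1 h, h'⟩)]
      exact h0 y
  refine ⟨χ, hχd, h0, h1, hin, hout, fun x i => ?_, hz⟩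
  by_cases hx : R < ‖x‖ ∧ ‖x‖ < R + 1
  swap
  · rw [hz x hx]
    simpa using hM0
  have hqx : HasFDerivAt q ((2 * R + 1)⁻¹ • (0 - (2 : ℕ) • (innerSL ℝ x : E2 →L[ℝ] ℝ))) x := by
    have := ((hasFDerivAt_const ((R + 1) ^ 2) x).sub
      (hasStrictFDerivAt_norm_sq x).hasFDerivAt).mul_const (2 * R + 1)⁻¹
    simp only [hq, div_eq_mul_inv]
    exact this
  have hst : HasDerivAt Real.smoothTransition (deriv Real.smoothTransition (q x)) (q x) :=
    ((Real.smoothTransition.contDiff (n := 1)).differentiable one_ne_zero _).hasDerivAt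
  have hcomp : HasFDerivAt χ _ x := hst.comp_hasFDerivAt x hqx
  rw [hcomp.fderiv]
  have hxi : |x i| ≤ R + 1 := (PiLp.norm_apply_le x i).trans hx.2.le
  have hval : (deriv Real.smoothTransition (q x) • ((2 * R + 1)⁻¹ • (0 - (2 : ℕ) • (innerSL ℝ x : E2 →L[ℝ] ℝ))))
      (EuclideanSpace.single i (1 : ℝ)) =
      deriv Real.smoothTransition (q x) * (-(2 * x i / (2 * R + 1))) := by
    have he : (innerSL ℝ x : E2 →L[ℝ] ℝ) (EuclideanSpace.single i (1 : ℝ)) = x i := by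
      simp [EuclideanSpace.inner_single_right]
    simp only [_root_.smul_apply, _root_.sub_apply,
      _root_.zero_apply, he, smul_eq_mul, nsmul_eq_mul]
    push_cast
    ring
  rw [hval, abs_mul, abs_neg, abs_div, abs_mul, abs_of_pos hR1]
  refine mul_le_mul (hM _) ?_ (by positivity) hM0
  rw [div_le_iff₀ hR1, abs_two]
  linarith

/-- The `i`-th component of the current `Im (v̄ ∇v)`. -/
noncomputable def current (v : E2 → ℂ) (i : Fin 2) (x : E2) : ℝ :=
  (v x).re * (fderiv ℝ v x (EuclideanSpace.single i 1)).im -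
    (v x).im * (fderiv ℝ v x (EuclideanSpace.single i 1)).re

lemma contDiff_partial {v : E2 → ℂ} (hv : ContDiff ℝ 2 v) (i : Fin 2) :
    ContDiff ℝ 1 (fun x => fderiv ℝ v x (EuclideanSpace.single i 1)) :=
  (hv.fderiv_right (m := 1) (by norm_num)).clm_apply contDiff_const

lemma contDiff_current {v : E2 → ℂ} (hv : ContDiff ℝ 2 v) (i : Fin 2) :
    ContDiff ℝ 1 (current v i) := by
  have h1 : ContDiff ℝ 1 v := hv.of_le (by norm_num)
  have h2 := contDiff_partial hv i
  exact ((Complex.reCLM.contDiff.comp h1).mul (Complex.imCLM.contDiff.comp h2)).sub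
    ((Complex.imCLM.contDiff.comp h1).mul (Complex.reCLM.contDiff.comp h2))

/-- `∂ᵢ Im (v̄ ∂ᵢv) = Im (v̄ ∂ᵢ²v)`: the remaining term `|∂ᵢv|²` is real. -/
lemma fderiv_current {v : E2 → ℂ} (hv : ContDiff ℝ 2 v) (i : Fin 2) (x : E2) :
    fderiv ℝ (current v i) x (EuclideanSpace.single i 1) =
      (v x).re * (fderiv ℝ (fun y => fderiv ℝ v y (EuclideanSpace.single i 1)) x
        (EuclideanSpace.single i 1)).im -
      (v x).im * (fderiv ℝ (fun y => fderiv ℝ v y (EuclideanSpace.single i 1)) x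
        (EuclideanSpace.single i 1)).re := by
  have h1 : HasFDerivAt v (fderiv ℝ v x) x := (hv.differentiable two_ne_zero x).hasFDerivAt
  have h2 := ((contDiff_partial hv i).differentiable one_ne_zero x).hasFDerivAt
  have h3 : HasFDerivAt (current v i) _ x :=
    ((Complex.reCLM.hasFDerivAt.comp x h1).mul (Complex.imCLM.hasFDerivAt.comp x h2)).sub
    ((Complex.imCLM.hasFDerivAt.comp x h1).mul (Complex.reCLM.hasFDerivAt.comp x h2))
  rw [h3.fderiv]
  simp
  ring

/-- The divergence of the current of a solution is `-Im (k²) |v|²`. -/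
lemma sum_fderiv_current {k : ℂ} {v : E2 → ℂ} (hv : ContDiff ℝ 2 v)
    (hpde : ∀ x : E2, lapC v x + k ^ 2 * v x = 0) (x : E2) :
    ∑ i : Fin 2, fderiv ℝ (current v i) x (EuclideanSpace.single i 1) =
      -(2 * k.re * k.im * ‖v x‖ ^ 2) := by
  have h : lapC v x = -(k ^ 2 * v x) := eq_neg_of_add_eq_zero_left (hpde x)
  have hre := congrArg Complex.re h
  have him := congrArg Complex.im h
  simp only [lapC, Fin.sum_univ_two, Complex.add_re, Complex.add_im, Complex.neg_re,
    Complex.neg_im, Complex.mul_re, Complex.mul_im, pow_two] at hre him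
  rw [Fin.sum_univ_two, fderiv_current hv, fderiv_current hv, ← Complex.normSq_eq_norm_sq,
    Complex.normSq_apply]
  linear_combination (v x).re * him - (v x).im * hre

lemma abs_current_le (v : E2 → ℂ) (i : Fin 2) (x : E2) :
    |current v i x| ≤
      (‖v x‖ ^ 2 + ‖fderiv ℝ v x (EuclideanSpace.single i 1)‖ ^ 2) / 2 := by
  simp only [current, ← Complex.normSq_eq_norm_sq, Complex.normSq_apply]
  generalize fderiv ℝ v x (EuclideanSpace.single i 1) = w
  rw [abs_le]
  constructor
  · nlinarith [sq_nonneg ((v x).re + w.im), sq_nonneg ((v x).im - w.re)]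
  · nlinarith [sq_nonneg ((v x).re - w.im), sq_nonneg ((v x).im + w.re)]

lemma integral_mul_fderiv_of_hasCompactSupport {χ : E2 → ℝ} (hχ : ContDiff ℝ 1 χ) (hs : HasCompactSupport χ)
    {G : E2 → ℝ} (hG : ContDiff ℝ 1 G) (e : E2) :
    Integrable (fun x => fderiv ℝ χ x e * G x) ∧ Integrable (fun x => χ x * fderiv ℝ G x e) ∧
    ∫ x, χ x * fderiv ℝ G x e = - ∫ x, fderiv ℝ χ x e * G x := by
  have hχ' : Continuous fun x => fderiv ℝ χ x e :=
    (hχ.continuous_fderiv one_ne_zero).clm_apply continuous_const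
  have hG' : Continuous fun x => fderiv ℝ G x e :=
    (hG.continuous_fderiv one_ne_zero).clm_apply continuous_const
  have h1 : Integrable (fun x => fderiv ℝ χ x e * G x) :=
    (hχ'.mul hG.continuous).integrable_of_hasCompactSupport (hs.fderiv_apply ℝ e).mul_right
  have h2 : Integrable (fun x => χ x * fderiv ℝ G x e) :=
    (hχ.continuous.mul hG').integrable_of_hasCompactSupport hs.mul_right
  refine ⟨h1, h2, integral_mul_fderiv_eq_neg_fderiv_mul_of_integrable h1 h2
    ((hχ.continuous.mul hG.continuous).integrable_of_hasCompactSupport hs.mul_right)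
    (fun x _ => hχ.differentiable one_ne_zero x) (fun x _ => hG.differentiable one_ne_zero x)⟩

lemma continuous_energy {v : E2 → ℂ} (hv : ContDiff ℝ 2 v) :
    Continuous fun x => ‖v x‖ ^ 2 + gradNormSq v x := by
  unfold gradNormSq
  exact (hv.continuous.norm.pow 2).add
    (continuous_finsetSum _ fun i _ => (contDiff_partial hv i).continuous.norm.pow 2)

lemma hasCompactSupport_of_norm {χ : E2 → ℝ} {r : ℝ} (h : ∀ x, r ≤ ‖x‖ → χ x = 0) :
    HasCompactSupport χ :=
  HasCompactSupport.intro (isCompact_closedBall (0 : E2) r) fun x hx =>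
    h x (le_of_lt (by simpa using hx))

/-- The energy estimate: the mass of a solution against a cutoff is controlled by its energy in
the transition annulus of that cutoff. -/
lemma cutoff_estimate {k : ℂ} {v : E2 → ℂ} (hv : ContDiff ℝ 2 v)
    (hpde : ∀ x : E2, lapC v x + k ^ 2 * v x = 0) {M R : ℝ} {χ : E2 → ℝ}
    (hχ : ContDiff ℝ 1 χ) (hout : ∀ x, R + 1 ≤ ‖x‖ → χ x = 0)
    (hM : ∀ x (i : Fin 2), |fderiv ℝ χ x (EuclideanSpace.single i 1)| ≤ M)
    (hz : ∀ x, ¬ (R < ‖x‖ ∧ ‖x‖ < R + 1) → fderiv ℝ χ x = 0) :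
    2 * k.re * k.im * ∫ x, χ x * ‖v x‖ ^ 2 ≤
      M * ∫ x in {x : E2 | R < ‖x‖ ∧ ‖x‖ < R + 1}, (‖v x‖ ^ 2 + gradNormSq v x) := by
  have hs := hasCompactSupport_of_norm hout
  have key := fun i : Fin 2 => integral_mul_fderiv_of_hasCompactSupport hχ hs (contDiff_current hv i)
    (EuclideanSpace.single i 1)
  have hM0 : 0 ≤ M := (abs_nonneg _).trans (hM 0 0)
  have hA : MeasurableSet {x : E2 | R < ‖x‖ ∧ ‖x‖ < R + 1} :=
    ((isOpen_lt continuous_const continuous_norm).inter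
      (isOpen_lt continuous_norm continuous_const)).measurableSet
  have henergy : IntegrableOn (fun x => M * (‖v x‖ ^ 2 + gradNormSq v x))
      {x : E2 | R < ‖x‖ ∧ ‖x‖ < R + 1} :=
    ((continuous_const.mul (continuous_energy hv)).continuousOn.integrableOn_compact
      (isCompact_closedBall (0 : E2) (R + 1))).mono_set fun x hx => by simpa using hx.2.le
  have e1 : 2 * k.re * k.im * ∫ x, χ x * ‖v x‖ ^ 2 =
      ∫ x, ∑ i : Fin 2, fderiv ℝ χ x (EuclideanSpace.single i 1) * current v i x := by
    rw [integral_finsetSum _ fun i _ => (key i).1, ← neg_neg (∑ i : Fin 2, _),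
      ← Finset.sum_neg_distrib]
    simp_rw [← fun i => (key i).2.2]
    rw [← integral_finsetSum _ fun i _ => (key i).2.1, ← integral_neg, ← integral_const_mul]
    refine integral_congr_ae (Eventually.of_forall fun x => ?_)
    simp only [← Finset.mul_sum, sum_fderiv_current hv hpde x]
    ring
  rw [e1, ← integral_const_mul, ← integral_indicator hA]
  refine integral_mono (integrable_finsetSum _ fun i _ => (key i).1)
    ((integrable_indicator_iff hA).2 henergy) fun x => ?_
  by_cases hx : R < ‖x‖ ∧ ‖x‖ < R + 1
  · rw [Set.indicator_of_mem (show x ∈ {x : E2 | R < ‖x‖ ∧ ‖x‖ < R + 1} from hx)]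
    have hb : ∀ i : Fin 2, fderiv ℝ χ x (EuclideanSpace.single i 1) * current v i x ≤
        M * ((‖v x‖ ^ 2 + ‖fderiv ℝ v x (EuclideanSpace.single i 1)‖ ^ 2) / 2) := fun i =>
      (le_abs_self _).trans <| by
        rw [abs_mul]
        exact mul_le_mul (hM x i) (abs_current_le v i x) (abs_nonneg _) hM0
    have hg : 0 ≤ M * gradNormSq v x :=
      mul_nonneg hM0 (Finset.sum_nonneg fun i _ => sq_nonneg _)
    simp only [gradNormSq, Fin.sum_univ_two] at hg ⊢
    linarith [hb 0, hb 1]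
  · rw [Set.indicator_of_notMem (show x ∉ {x : E2 | R < ‖x‖ ∧ ‖x‖ < R + 1} from hx)]
    simp [hz x hx]

/-- **Rellich-type uniqueness for complex wave numbers**: a `C²` solution of the homogeneous
Helmholtz equation `Δv + k²v = 0` on `ℝ²`, `Re k > 0`, `Im k > 0`, whose energy in the annuli
`{R < |x| < R+1}` tends to `0`, vanishes identically. -/
theorem helmholtz_unique_of_decay
    (k : ℂ) (hk₁ : 0 < k.re) (hk₂ : 0 < k.im)
    (v : E2 → ℂ) (hv : ContDiff ℝ 2 v)
    (hpde : ∀ x : E2, lapC v x + k ^ 2 * v x = 0)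
    (hdecay : Filter.Tendsto
      (fun R : ℝ => ∫ x in {x : E2 | R < ‖x‖ ∧ ‖x‖ < R + 1}, (‖v x‖ ^ 2 + gradNormSq v x))
      Filter.atTop (nhds 0)) :
    ∀ x : E2, v x = 0 := by
  obtain ⟨M, hcut⟩ := exists_cutoff
  have hk : 0 < 2 * k.re * k.im := by positivity
  intro x₀
  by_contra hx₀
  obtain ⟨χ₀, hχ₀, h0, h1, hin, hout, -, -⟩ := hcut ‖x₀‖ (norm_nonneg _)
  have hs := hasCompactSupport_of_norm hout
  have hc : Continuous fun x => χ₀ x * ‖v x‖ ^ 2 :=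
    hχ₀.continuous.mul (hv.continuous.norm.pow 2)
  have hpos : 0 < ∫ x, χ₀ x * ‖v x‖ ^ 2 := by
    refine hc.integral_pos_of_hasCompactSupport_nonneg_nonzero (x := x₀) hs.mul_right
      (fun x => mul_nonneg (h0 x) (sq_nonneg _)) ?_
    rw [hin x₀ le_rfl]
    simpa using hx₀
  have hlim := hdecay.const_mul M
  rw [mul_zero] at hlim
  have hle : 2 * k.re * k.im * ∫ x, χ₀ x * ‖v x‖ ^ 2 ≤ 0 := by
    refine ge_of_tendsto hlim ?_
    filter_upwards [eventually_ge_atTop (‖x₀‖ + 1)] with R hR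
    obtain ⟨χ, hχ, g0, -, gin, gout, gM, gz⟩ := hcut R (by linarith [norm_nonneg x₀])
    refine le_trans ?_ (cutoff_estimate hv hpde hχ gout gM gz)
    refine mul_le_mul_of_nonneg_left (integral_mono
      (hc.integrable_of_hasCompactSupport hs.mul_right)
      ((hχ.continuous.mul (hv.continuous.norm.pow 2)).integrable_of_hasCompactSupport
        (hasCompactSupport_of_norm gout).mul_right) fun x => ?_) hk.le
    refine mul_le_mul_of_nonneg_right ?_ (sq_nonneg _)
    -- `χ = 1` on the support of `χ₀`, since `R ≥ ‖x₀‖ + 1`.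
    by_cases hx : ‖x‖ ≤ R
    · rw [gin x hx]
      exact h1 x
    · rw [hout x (by linarith)]
      exact g0 x
  linarith [mul_pos hk hpos]
end

section
/- Let Ω be a bounded open subset of ℝ², let f₀, f₁ be real-valued integrable functions with compact supports contained in Ω, and let x ∈ ℝ² with positive distance from the supports of f₀ and f₁. Then the function k ↦ u(x,k) = (−i/4)∫_Ω H₀⁽¹⁾(k|x−y|)(f₁(y) + ik f₀(y)) dy is holomorphic on the half-plane { k ∈ ℂ : Re k > 0 }. -/
/-!
The Hankel function is holomorphic on the right half-plane: `J₀` and the series in `Y₀` are entire,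
since their coefficients are `O(1 / m!)` in powers of `(z / 2) ^ 2`, and `log (z / 2)` is holomorphic
off the negative axis (`differentiableOn_hankelH0`).

The integrand of `u(x, k)` vanishes off the compact set `K = supp f₀ ∪ supp f₁ ⊆ Ω`, on which
`|x - y|` is continuous and bounded below by `δ > 0`. When `k` ranges over a small closed disc in the
half-plane, the products `k |x - y|` therefore stay in a compact subset of the half-plane, where the
derivative of the Hankel function is bounded, and one may differentiate under the integral sign
(`differentiableAt_setIntegral_comp_mul`). Splitting `f₁ + i k f₀` gives the result.
-/

open MeasureTheory Real Complex Filter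

/-- A power series in `(z / 2) ^ 2` with coefficients bounded by `1 / m!` is entire; the shift `s`
accommodates the series of `Y₀`, which starts at the first-order term. -/
lemma differentiable_tsum_half_pow (s : ℕ) (a : ℕ → ℂ)
    (ha : ∀ m, ‖a m‖ ≤ 1 / ((m + s).factorial : ℝ)) :
    Differentiable ℂ (fun z : ℂ => ∑' m : ℕ, a m * (z / 2) ^ (2 * (m + s))) := by
  intro z₀
  set R : ℝ := ‖z₀‖ + 1 with hR
  have hsum : Summable (fun m : ℕ => (R ^ 2) ^ (m + s) / ((m + s).factorial : ℝ)) :=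
    (summable_nat_add_iff s).2 (Real.summable_pow_div_factorial (R ^ 2))
  have hd : DifferentiableOn ℂ (fun z : ℂ => ∑' m : ℕ, a m * (z / 2) ^ (2 * (m + s)))
      (Metric.ball 0 R) := by
    refine Complex.differentiableOn_tsum_of_summable_norm hsum (fun m => ?_) Metric.isOpen_ball ?_
    · exact Differentiable.differentiableOn (by fun_prop)
    · intro m z hz
      have hz' : ‖z / 2‖ ≤ R := by
        rw [mem_ball_zero_iff] at hz
        rw [norm_div, Complex.norm_ofNat]
        linarith [norm_nonneg z]
      calc ‖a m * (z / 2) ^ (2 * (m + s))‖ = ‖a m‖ * (‖z / 2‖ ^ 2) ^ (m + s) := by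
            rw [norm_mul, norm_pow, pow_mul]
        _ ≤ 1 / ((m + s).factorial : ℝ) * (R ^ 2) ^ (m + s) := by
            gcongr
            exact ha m
        _ = (R ^ 2) ^ (m + s) / ((m + s).factorial : ℝ) := by ring
  refine hd.differentiableAt (Metric.isOpen_ball.mem_nhds ?_)
  rw [mem_ball_zero_iff]
  linarith

lemma differentiable_besselJ0 : Differentiable ℂ besselJ0 := by
  have h := differentiable_tsum_half_pow 0 (fun m => (-1 : ℂ) ^ m / ((m.factorial : ℂ)) ^ 2) ?_
  · convert h using 2 with z
    unfold besselJ0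
    refine tsum_congr fun m => ?_
    simp only [add_zero]
    ring
  · intro m
    have h1 : (1 : ℝ) ≤ m.factorial := by exact_mod_cast m.factorial_pos
    simp only [norm_div, norm_pow, norm_neg, norm_one, one_pow, Complex.norm_natCast, add_zero]
    gcongr
    nlinarith

lemma norm_harmSum_le (m : ℕ) : ‖harmSum m‖ ≤ m := by
  unfold harmSum
  refine (norm_sum_le_of_le (f := fun j : ℕ => (1 : ℂ) / (j + 1)) _
    (n := fun _ => (1 : ℝ)) fun j _ => ?_).trans (by simp)
  have : ((j : ℂ) + 1) = ((j + 1 : ℕ) : ℂ) := by push_cast; rfl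
  rw [this, norm_div, norm_one, Complex.norm_natCast]
  refine (div_le_one (by positivity)).2 ?_
  push_cast
  linarith [(Nat.cast_nonneg j : (0 : ℝ) ≤ j)]

/-- The power series occurring in `Y₀` is entire. -/
lemma differentiable_besselY0_series : Differentiable ℂ (fun z : ℂ =>
    ∑' m : ℕ, ((-1 : ℂ) ^ (m + 1) * (z / 2) ^ (2 * (m + 1)) * harmSum (m + 1)) /
        (((m + 1).factorial : ℂ)) ^ 2) := by
  have h := differentiable_tsum_half_pow 1
    (fun m => (-1 : ℂ) ^ (m + 1) * harmSum (m + 1) / (((m + 1).factorial : ℂ)) ^ 2) ?_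
  · convert h using 4 with z m
    ring
  · intro m
    have h1 : (0 : ℝ) < (m + 1).factorial := by exact_mod_cast (m + 1).factorial_pos
    have h2 : ‖harmSum (m + 1)‖ ≤ (m + 1).factorial :=
      (norm_harmSum_le _).trans (by exact_mod_cast (m + 1).self_le_factorial)
    simp only [norm_div, norm_mul, norm_pow, norm_neg, norm_one, one_pow, Complex.norm_natCast,
      one_mul]
    rw [div_le_div_iff₀ (by positivity) h1]
    nlinarith

lemma differentiableOn_hankelH0 : DifferentiableOn ℂ hankelH0 {z : ℂ | 0 < z.re} := by
  have hlog : DifferentiableOn ℂ (fun z : ℂ => Complex.log (z / 2)) {z : ℂ | 0 < z.re} := by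
    refine DifferentiableOn.clog (by fun_prop) fun z hz => Or.inl ?_
    have hz : 0 < z.re := hz
    simpa using hz
  have hJ := differentiable_besselJ0.differentiableOn (s := {z : ℂ | 0 < z.re})
  have hS := differentiable_besselY0_series.differentiableOn (s := {z : ℂ | 0 < z.re})
  have hY : DifferentiableOn ℂ besselY0 {z : ℂ | 0 < z.re} :=
    (((hlog.const_add _).mul hJ).sub hS).const_mul _
  exact hJ.add (hY.const_mul _)

lemma isOpen_re_pos : IsOpen {z : ℂ | 0 < z.re} :=
  isOpen_lt continuous_const Complex.continuous_re

lemma continuousOn_comp_mul {G : ℂ → ℂ} (hG : ContinuousOn G {z : ℂ | 0 < z.re})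
    {K : Set E2} {r : E2 → ℝ} (hr : Continuous r) (hpos : ∀ y ∈ K, 0 < r y)
    {k : ℂ} (hk : 0 < k.re) : ContinuousOn (fun y => G (k * (r y : ℝ))) K := by
  refine hG.comp (by fun_prop) fun y hy => ?_
  have := mul_pos hk (hpos y hy)
  simpa using this

lemma integrableOn_comp_mul {G : ℂ → ℂ} (hG : ContinuousOn G {z : ℂ | 0 < z.re})
    {K : Set E2} (hK : IsCompact K) {r : E2 → ℝ} (hr : Continuous r) (hpos : ∀ y ∈ K, 0 < r y)
    {g : E2 → ℂ} (hg : IntegrableOn g K) {k : ℂ} (hk : 0 < k.re) :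
    IntegrableOn (fun y => G (k * (r y : ℝ)) * g y) K :=
  hg.continuousOn_mul (continuousOn_comp_mul hG hr hpos hk) hK

/-- Differentiation under the integral sign for a kernel `G (k r(y))`, with `G` holomorphic on the
right half-plane and `r` continuous and positive on a compact set. -/
lemma differentiableAt_setIntegral_comp_mul {G : ℂ → ℂ}
    (hG : DifferentiableOn ℂ G {z : ℂ | 0 < z.re})
    {K : Set E2} (hK : IsCompact K) {r : E2 → ℝ} (hr : Continuous r) (hpos : ∀ y ∈ K, 0 < r y)
    {g : E2 → ℂ} (hg : IntegrableOn g K) {k₀ : ℂ} (hk₀ : 0 < k₀.re) :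
    DifferentiableAt ℂ (fun k : ℂ => ∫ y in K, G (k * (r y : ℝ)) * g y) k₀ := by
  have hG' : ContinuousOn (deriv G) {z : ℂ | 0 < z.re} := (hG.deriv isOpen_re_pos).continuousOn
  have hball : ∀ k ∈ Metric.closedBall k₀ (k₀.re / 2), 0 < k.re := by
    intro k hk
    rw [mem_closedBall_iff_norm] at hk
    have := (abs_le.1 ((Complex.abs_re_le_norm (k - k₀)).trans hk)).1
    rw [Complex.sub_re] at this
    linarith
  have hmem : ∀ k ∈ Metric.closedBall k₀ (k₀.re / 2), ∀ y ∈ K,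
      k * (r y : ℝ) ∈ {z : ℂ | 0 < z.re} := by
    intro k hk y hy
    have := mul_pos (hball k hk) (hpos y hy)
    simpa using this
  have hcont : ContinuousOn (fun p : ℂ × E2 => deriv G (p.1 * (r p.2 : ℝ)) * (r p.2 : ℝ))
      (Metric.closedBall k₀ (k₀.re / 2) ×ˢ K) := by
    refine ContinuousOn.mul (hG'.comp (by fun_prop) fun p hp => hmem _ hp.1 _ hp.2) (by fun_prop)
  obtain ⟨M, hM⟩ := ((isCompact_closedBall k₀ (k₀.re / 2)).prod hK).exists_bound_of_continuousOn hcont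
  refine (hasDerivAt_integral_of_dominated_loc_of_deriv_le (μ := volume.restrict K)
    (F := fun k y => G (k * (r y : ℝ)) * g y)
    (F' := fun k y => deriv G (k * (r y : ℝ)) * (r y : ℝ) * g y)
    (bound := fun y => M * ‖g y‖)
    (Metric.ball_mem_nhds k₀ (half_pos hk₀)) ?_ ?_ ?_ ?_ ?_ ?_).2.differentiableAt
  · filter_upwards [isOpen_re_pos.mem_nhds hk₀] with k hk
    exact (integrableOn_comp_mul hG.continuousOn hK hr hpos hg hk).aestronglyMeasurable
  · exact integrableOn_comp_mul hG.continuousOn hK hr hpos hg hk₀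
  · exact (hg.continuousOn_mul ((continuousOn_comp_mul hG' hr hpos hk₀).mul
      (by fun_prop)) hK).aestronglyMeasurable
  · filter_upwards [ae_restrict_mem hK.measurableSet] with y hy k hk
    rw [norm_mul]
    gcongr
    exact hM (k, y) ⟨Metric.ball_subset_closedBall hk, hy⟩
  · exact hg.norm.const_mul M
  · filter_upwards [ae_restrict_mem hK.measurableSet] with y hy k hk
    have hd := (hG.differentiableAt (isOpen_re_pos.mem_nhds
      (hmem k (Metric.ball_subset_closedBall hk) y hy))).hasDerivAt
    have hm : HasDerivAt (fun k : ℂ => k * (r y : ℝ)) ((r y : ℝ) : ℂ) k :=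
      hasDerivAt_mul_const _
    exact (hd.comp k hm).mul_const (g y)

/-- **Holomorphy of the scattering solution in the wave number**: if `x` keeps a positive
distance from the supports of `f₀` and `f₁`, then `k ↦ u(x,k)` is holomorphic on
`{Re k > 0}`. -/
theorem scatSol_holomorphic
    (Ω : Set E2) (hΩo : IsOpen Ω) (hΩb : Bornology.IsBounded Ω)
    (f₀ f₁ : E2 → ℝ)
    (hi₀ : MeasureTheory.Integrable f₀) (hi₁ : MeasureTheory.Integrable f₁)
    (hc₀ : HasCompactSupport f₀) (hc₁ : HasCompactSupport f₁)
    (hs₀ : tsupport f₀ ⊆ Ω) (hs₁ : tsupport f₁ ⊆ Ω)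
    (x : E2) (δ : ℝ) (hδ : 0 < δ)
    (hdist : ∀ y ∈ tsupport f₀ ∪ tsupport f₁, δ ≤ ‖x - y‖) :
    DifferentiableOn ℂ (fun k : ℂ => scatSol Ω f₀ f₁ x k) {k : ℂ | 0 < k.re} := by
  set K : Set E2 := tsupport f₀ ∪ tsupport f₁ with hKdef
  have hK : IsCompact K := hc₀.isCompact.union hc₁.isCompact
  have hr : Continuous (fun y : E2 => ‖x - y‖) := by fun_prop
  have hpos : ∀ y ∈ K, 0 < ‖x - y‖ := fun y hy => hδ.trans_le (hdist y hy)
  have hg₀ : IntegrableOn (fun y => (f₀ y : ℂ)) K := hi₀.ofReal.integrableOn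
  have hg₁ : IntegrableOn (fun y => (f₁ y : ℂ)) K := hi₁.ofReal.integrableOn
  have hH := differentiableOn_hankelH0
  have key : ∀ k : ℂ, 0 < k.re → scatSol Ω f₀ f₁ x k = (-Complex.I / 4) *
      ((∫ y in K, hankelH0 (k * (‖x - y‖ : ℝ)) * (f₁ y : ℂ)) +
        Complex.I * k * ∫ y in K, hankelH0 (k * (‖x - y‖ : ℝ)) * (f₀ y : ℂ)) := by
    intro k hk
    have hΩK : ∫ y in Ω, hankelH0 (k * (‖x - y‖ : ℝ)) * ((f₁ y : ℂ) + Complex.I * k * (f₀ y : ℂ)) =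
        ∫ y in K, hankelH0 (k * (‖x - y‖ : ℝ)) * ((f₁ y : ℂ) + Complex.I * k * (f₀ y : ℂ)) := by
      refine setIntegral_eq_of_subset_of_forall_sdiff_eq_zero hΩo.measurableSet
        (Set.union_subset hs₀ hs₁) fun y hy => ?_
      have h0 : f₀ y = 0 := image_eq_zero_of_notMem_tsupport fun h => hy.2 (Or.inl h)
      have h1 : f₁ y = 0 := image_eq_zero_of_notMem_tsupport fun h => hy.2 (Or.inr h)
      simp [h0, h1]
    unfold scatSol
    rw [hΩK, ← integral_const_mul (Complex.I * k), ← integral_add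
      (integrableOn_comp_mul hH.continuousOn hK hr hpos hg₁ hk)
      ((integrableOn_comp_mul hH.continuousOn hK hr hpos hg₀ hk).const_mul _)]
    congr 2
    ext y
    ring
  intro k hk
  refine DifferentiableWithinAt.congr ?_ key (key k hk)
  have h₀ := differentiableAt_setIntegral_comp_mul hH hK hr hpos hg₀ hk
  have h₁ := differentiableAt_setIntegral_comp_mul hH hK hr hpos hg₁ hk
  exact ((h₁.add ((differentiableAt_id.const_mul Complex.I).mul h₀)).const_mul
    _).differentiableWithinAt
end
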